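/- Convergence for s > 1/2. Assume (H1)–(H4) and s ∈ (1/2,1). For each ε > 0 let u^ε be the unique viscosity solution of ∂_t u^ε = ε^{2s−1} I_s[u^ε(t,·)] − W'(u^ε/ε) + σ(t/ε, x/ε) on ℝ⁺×ℝ^N with u^ε(0,x)=u₀(x), and let u⁰ be the unique viscosity solution of ∂_t u = H̄₁(∇_x u) on ℝ⁺×ℝ^N with u(0,x)=u₀(x), where H̄₁(p) := H̄(p,0). Then u^ε converges to u⁰ locally uniformly in (t,x) as ε → 0. -/

import Mathlib

/-!
The proof compares `u^ε` directly with `u⁰`, without a perturbed test function. Since `s > 1/2`, one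
can fix `γ` with `1 < γ < 2s`. The kernel is then integrable against `min(|z|², |z|^γ)`
(`wgt_integrable`), so the *superlinear* function `⟨y⟩^γ = (1 + |y|²)^{γ/2}` may be used as a
penalisation in nonlocal comparison arguments. This is the only use of `s > 1/2`.

*Microscopic comparison* (`micro`). Let `V` be a subsolution of `∂_τ V = I_s[V] - W'(V) + σ` with
`V(0,y) ≤ ⟪p,y⟫ + κ ⟨y⟩^γ`. Then `V ≤ w + ⟪p,·⟫ + 2 κ e^{Λτ} ⟨·⟩^γ`, where `w` is the corrector of
slope `p` and `Λ` depends only on the kernel and on the Lipschitz constant of `W'`.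

*Slope at a contact point* (`one_step`, `local_slope`, `uniform_slope`). Suppose that a quadratic
function with time slope `λ` and gradient `q`, plus a small multiple of `⟨x⟩`, touches `u^ε` from
above at `(t,x)`. Blow `u^ε` up by the factor `1/ε` at a lattice point lying at rescaled time
between `T₀` and `T₀ + 1` before the contact point (`rescale`). By periodicity the blow-up
solves the equation of the cell problem, and by the contact it starts below a plane of slope `p`
close to `q`, up to `κ ⟨y⟩^γ` with `κ` small (`small_superlinear`). The microscopic comparison
bounds `λ` by the growth rate of the corrector over `T₀`, up to an error proportional to `κ`.
Choosing first `T₀` large, then `ε` small, gives `λ ≤ H̄₁(q) + θ/2`; compactness makes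
this uniform over bounded sets of gradients.

*Conclusion* (`comparison`, `one_sided`). The barriers `u₀ ± C t` (`barrier`) control both
solutions near `t = 0`. If `u^ε - u⁰` were somewhere larger than `η`, doubling the variables with a
parameter `δ` *independent of* `ε` would give a contact point with time slope `λ ≥ H̄₁(q) + θ`, by the
supersolution property of `u⁰`, contradicting the slope bound for small `ε`. The inequality in the
other direction follows by applying this to `-u^ε`, which solves the equation with `W(-·)`, `-σ` and
`-H̄₁(-·)`.
-/

open MeasureTheory Filter Metric Set RealInnerProductSpace

noncomputable section

/-- `ℝ^N` as a Euclidean space. -/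
abbrev EN (N : ℕ) := EuclideanSpace ℝ (Fin N)

/-- The singular kernel `g(z/|z|) |z|^{-N-2s}` of the anisotropic Lévy operator. -/
noncomputable def levyKernel (N : ℕ) (s : ℝ) (g : EN N → ℝ) (z : EN N) : ℝ :=
  g (‖z‖⁻¹ • z) * ‖z‖ ^ (-(N : ℝ) - 2 * s)

/-- `I^{1,r}[φ, x]`: integral over `|z| ≤ r` of the second order increment of `φ`. -/
noncomputable def levyI1 (N : ℕ) (s : ℝ) (g : EN N → ℝ) (φ : EN N → ℝ) (r : ℝ) (x : EN N) : ℝ :=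
  ∫ z in {z : EN N | ‖z‖ ≤ r}, (φ (x + z) - φ x - fderiv ℝ φ x z) * levyKernel N s g z

/-- `I^{2,r}[u, x]`: integral over `|z| > r` of the increment of `u`. -/
noncomputable def levyI2 (N : ℕ) (s : ℝ) (g : EN N → ℝ) (u : EN N → ℝ) (r : ℝ) (x : EN N) : ℝ :=
  ∫ z in {z : EN N | r < ‖z‖}, (u (x + z) - u x) * levyKernel N s g z

/-- The anisotropic Lévy operator `I_s` of order `2s`, defined as a principal value. -/
noncomputable def levyOp (N : ℕ) (s : ℝ) (g : EN N → ℝ) (φ : EN N → ℝ) (x : EN N) : ℝ :=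
  limUnder (nhdsWithin 0 (Ioi (0:ℝ)))
    (fun ρ => ∫ y in {y : EN N | ρ < ‖y‖}, (φ (x + y) - φ x) * levyKernel N s g y)

/-- (H1): `g` is continuous, positive on the sphere and even. -/
def H1 (N : ℕ) (g : EN N → ℝ) : Prop :=
  Continuous g ∧ (∀ z : EN N, ‖z‖ = 1 → 0 < g z) ∧ (∀ z : EN N, g (-z) = g z)

/-- (H2): `W ∈ C^{1,1}(ℝ)` and `W(v+1) = W(v)`. -/
def H2 (W : ℝ → ℝ) : Prop :=
  ContDiff ℝ 1 W ∧ (∃ K : NNReal, LipschitzWith K (deriv W)) ∧ ∀ v, W (v + 1) = W v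

/-- (H3): `σ ∈ C^{0,1}(ℝ⁺ × ℝ^N)`, 1-periodic in `t` and ℤ^N-periodic in `x`. -/
def H3 (N : ℕ) (σ : ℝ → EN N → ℝ) : Prop :=
  (∃ K : NNReal, LipschitzWith K (fun q : ℝ × EN N => σ q.1 q.2)) ∧
  (∀ t x, σ (t + 1) x = σ t x) ∧
  (∀ (k : Fin N → ℤ) (t : ℝ) (x : EN N), σ t (x + (WithLp.equiv 2 (Fin N → ℝ)).symm (fun j => (k j : ℝ))) = σ t x)

/-- (H4): `u₀ ∈ W^{2,∞}(ℝ^N)`. -/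
def H4 (N : ℕ) (u₀ : EN N → ℝ) : Prop :=
  ContDiff ℝ 2 u₀ ∧
  ∃ M, ∀ x, |u₀ x| ≤ M ∧ ‖fderiv ℝ u₀ x‖ ≤ M ∧ ‖fderiv ℝ (fderiv ℝ u₀) x‖ ≤ M

/-- Boundedness on `(0,T) × ℝ^N` for every `T > 0`. -/
def LocBddPos (N : ℕ) (u : ℝ → EN N → ℝ) : Prop :=
  ∀ T > 0, ∃ M, ∀ t ∈ Ioc (0:ℝ) T, ∀ x, |u t x| ≤ M

/-- Viscosity subsolution of `∂_t u = F(t, x, u, ∇_x u, I_s[u(t,·)])` with initial datum `u₀`. -/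
def IsSubsol (N : ℕ) (s : ℝ) (g : EN N → ℝ)
    (F : ℝ → EN N → ℝ → (EN N →L[ℝ] ℝ) → ℝ → ℝ)
    (u₀ : EN N → ℝ) (u : ℝ → EN N → ℝ) : Prop :=
  UpperSemicontinuousOn (fun q : ℝ × EN N => u q.1 q.2) (Ici 0 ×ˢ univ) ∧
  LocBddPos N u ∧
  (∀ x, u 0 x ≤ u₀ x) ∧
  ∀ (t₀ : ℝ) (x₀ : EN N), 0 < t₀ →
    ∀ (φ : ℝ → EN N → ℝ), ContDiff ℝ 2 (fun q : ℝ × EN N => φ q.1 q.2) →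
    ∀ τ r : ℝ, 0 < τ → τ < t₀ → 0 < r →
    (∀ t x, t ∈ Ioo (t₀ - τ) (t₀ + τ) → x ∈ ball x₀ r →
      u t x - φ t x ≤ u t₀ x₀ - φ t₀ x₀) →
    deriv (fun t => φ t x₀) t₀ -
      F t₀ x₀ (u t₀ x₀) (fderiv ℝ (fun x => φ t₀ x) x₀)
        (levyI1 N s g (fun x => φ t₀ x) r x₀ + levyI2 N s g (fun x => u t₀ x) r x₀) ≤ 0

/-- Viscosity supersolution of `∂_t u = F(t, x, u, ∇_x u, I_s[u(t,·)])` with initial datum `u₀`. -/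
def IsSupersol (N : ℕ) (s : ℝ) (g : EN N → ℝ)
    (F : ℝ → EN N → ℝ → (EN N →L[ℝ] ℝ) → ℝ → ℝ)
    (u₀ : EN N → ℝ) (u : ℝ → EN N → ℝ) : Prop :=
  LowerSemicontinuousOn (fun q : ℝ × EN N => u q.1 q.2) (Ici 0 ×ˢ univ) ∧
  LocBddPos N u ∧
  (∀ x, u₀ x ≤ u 0 x) ∧
  ∀ (t₀ : ℝ) (x₀ : EN N), 0 < t₀ →
    ∀ (φ : ℝ → EN N → ℝ), ContDiff ℝ 2 (fun q : ℝ × EN N => φ q.1 q.2) →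
    ∀ τ r : ℝ, 0 < τ → τ < t₀ → 0 < r →
    (∀ t x, t ∈ Ioo (t₀ - τ) (t₀ + τ) → x ∈ ball x₀ r →
      u t₀ x₀ - φ t₀ x₀ ≤ u t x - φ t x) →
    0 ≤ deriv (fun t => φ t x₀) t₀ -
      F t₀ x₀ (u t₀ x₀) (fderiv ℝ (fun x => φ t₀ x) x₀)
        (levyI1 N s g (fun x => φ t₀ x) r x₀ + levyI2 N s g (fun x => u t₀ x) r x₀)

/-- Viscosity solution in `C_b(ℝ⁺ × ℝ^N)`. -/
def IsSol (N : ℕ) (s : ℝ) (g : EN N → ℝ)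
    (F : ℝ → EN N → ℝ → (EN N →L[ℝ] ℝ) → ℝ → ℝ)
    (u₀ : EN N → ℝ) (u : ℝ → EN N → ℝ) : Prop :=
  ContinuousOn (fun q : ℝ × EN N => u q.1 q.2) (Ici 0 ×ˢ univ) ∧
  IsSubsol N s g F u₀ u ∧ IsSupersol N s g F u₀ u

/-- The right-hand side of the cell problem
`∂_τ w = I_s[w(τ,·)] + L − W'(w + p·y) + σ(τ,y)`. -/
def cellF (N : ℕ) (W : ℝ → ℝ) (σ : ℝ → EN N → ℝ) (p : EN N) (L : ℝ) :
    ℝ → EN N → ℝ → (EN N →L[ℝ] ℝ) → ℝ → ℝ :=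
  fun τ y v _ I => I + L - deriv W (v + ⟪p, y⟫) + σ τ y

/-- `w(τ,y)/τ → lam` as `τ → +∞`, locally uniformly in `y`. -/
def SlopeLim (N : ℕ) (w : ℝ → EN N → ℝ) (lam : ℝ) : Prop :=
  ∀ ε > 0, ∀ R > 0, ∃ T : ℝ, ∀ τ, T ≤ τ → ∀ y : EN N, ‖y‖ ≤ R → |w τ y / τ - lam| ≤ ε

end

/-! ### The Lévy kernel -/

lemma levyKernel_nonneg {N : ℕ} {s : ℝ} {g : EN N → ℝ} (hg : H1 N g) (hs : 0 < s) (z : EN N) :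
    0 ≤ levyKernel N s g z := by
  unfold levyKernel
  by_cases hz : z = 0
  · subst hz
    have : (-(N : ℝ) - 2 * s) ≠ 0 := by
      have : (0 : ℝ) ≤ N := Nat.cast_nonneg N
      linarith
    simp [Real.zero_rpow this]
  · have h1 : ‖‖z‖⁻¹ • z‖ = 1 := by
      rw [norm_smul, norm_inv, norm_norm, inv_mul_cancel₀ (norm_ne_zero_iff.2 hz)]
    exact mul_nonneg (hg.2.1 _ h1).le (Real.rpow_nonneg (norm_nonneg _) _)

lemma levyKernel_neg {N : ℕ} {s : ℝ} {g : EN N → ℝ} (hg : H1 N g) (z : EN N) :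
    levyKernel N s g (-z) = levyKernel N s g z := by
  unfold levyKernel
  rw [norm_neg, smul_neg, hg.2.2]

lemma levyKernel_measurable {N : ℕ} {s : ℝ} {g : EN N → ℝ} (hg : H1 N g) :
    Measurable (levyKernel N s g) := by
  unfold levyKernel
  have := hg.1.measurable
  fun_prop

lemma levyKernel_bound {N : ℕ} {s : ℝ} {g : EN N → ℝ} (hg : H1 N g) :
    ∃ G : ℝ, 0 ≤ G ∧ ∀ z, levyKernel N s g z ≤ G * ‖z‖ ^ (-(N : ℝ) - 2 * s) := by
  obtain ⟨G, hG⟩ := (isCompact_closedBall (0 : EN N) 1).exists_bound_of_continuousOn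
    hg.1.continuousOn
  refine ⟨G, (norm_nonneg _).trans (hG 0 (by simp)), fun z => ?_⟩
  unfold levyKernel
  refine mul_le_mul_of_nonneg_right ?_ (Real.rpow_nonneg (norm_nonneg _) _)
  refine (le_abs_self _).trans (hG _ ?_)
  rw [mem_closedBall_zero_iff, norm_smul, norm_inv, norm_norm]
  exact inv_mul_le_one

lemma levyKernel_smul {N : ℕ} {s : ℝ} {g : EN N → ℝ} {c : ℝ} (hc : 0 < c) (z : EN N) :
    levyKernel N s g (c • z) = c ^ (-(N : ℝ) - 2 * s) * levyKernel N s g z := by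
  unfold levyKernel
  have h1 : ‖c • z‖ = c * ‖z‖ := by rw [norm_smul, Real.norm_of_nonneg hc.le]
  have h2 : (c * ‖z‖)⁻¹ • c • z = ‖z‖⁻¹ • z := by
    rw [smul_smul, mul_inv, mul_right_comm, inv_mul_cancel₀ hc.ne', one_mul]
  rw [h1, h2, Real.mul_rpow hc.le (norm_nonneg _)]
  ring

/-- The weight `min(|z|², |z|^γ)` against which a Lévy kernel of order `2s > γ` is integrable. -/
noncomputable def wgt {N : ℕ} (γ : ℝ) (z : EN N) : ℝ := min (‖z‖ ^ 2) (‖z‖ ^ γ)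

lemma wgt_nonneg {N : ℕ} (γ : ℝ) (z : EN N) : 0 ≤ wgt γ z :=
  le_min (by positivity) (by positivity)

lemma wgt_of_le {N : ℕ} {γ : ℝ} (h1 : 1 < γ) (h2 : γ < 2) {z : EN N} (hz : ‖z‖ ≤ 1) :
    wgt γ z = ‖z‖ ^ 2 := by
  unfold wgt
  refine min_eq_left ?_
  rw [← Real.rpow_two]
  rcases (norm_nonneg z).eq_or_lt with h | h
  · rw [← h, Real.zero_rpow (by norm_num), Real.zero_rpow (by linarith)]
  · exact Real.rpow_le_rpow_of_exponent_ge h hz h2.le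

lemma wgt_of_ge {N : ℕ} {γ : ℝ} (h2 : γ < 2) {z : EN N} (hz : 1 ≤ ‖z‖) :
    wgt γ z = ‖z‖ ^ γ := by
  unfold wgt
  refine min_eq_right ?_
  rw [← Real.rpow_two]
  exact Real.rpow_le_rpow_of_exponent_le hz h2.le

lemma wgt_measurable {N : ℕ} (γ : ℝ) : Measurable (wgt γ : EN N → ℝ) := by
  unfold wgt; fun_prop

lemma wgt_integrable {N : ℕ} (hN : 1 ≤ N) {s γ : ℝ} {g : EN N → ℝ} (hg : H1 N g) (hs : 0 < s)
    (hs1 : s < 1) (hγ2 : γ < 2 * s) :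
    Integrable (fun z : EN N => wgt γ z * levyKernel N s g z) := by
  obtain ⟨G, hG0, hG⟩ := levyKernel_bound hg
  have : Nontrivial (EN N) := by
    have : Nonempty (Fin N) := ⟨⟨0, hN⟩⟩
    infer_instance
  have key : Integrable
      (fun z : EN N => (fun y : ℝ => min (y ^ 2) (y ^ γ) * (G * y ^ (-(N : ℝ) - 2 * s))) ‖z‖) := by
    refine (integrable_fun_norm_addHaar (volume : Measure (EN N)) (f := fun y : ℝ =>
      min (y ^ 2) (y ^ γ) * (G * y ^ (-(N : ℝ) - 2 * s)))).2 ?_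
    rw [finrank_euclideanSpace_fin, ← Ioo_union_Ici_eq_Ioi (zero_lt_one (α := ℝ)),
      integrableOn_union]
    have hcast : ((N - 1 : ℕ) : ℝ) = N - 1 := by push_cast [hN]; ring
    constructor
    · have h0 : IntegrableOn (fun y : ℝ => G * y ^ (1 - 2 * s)) (Ioo 0 1) :=
        ((intervalIntegral.integrableOn_Ioo_rpow_iff one_pos).2 (by linarith)).const_mul G
      refine h0.congr_fun (fun y hy => ?_) measurableSet_Ioo
      have hy0 : 0 < y := hy.1
      have : min (y ^ 2) (y ^ γ) = y ^ (2 : ℝ) := by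
        rw [← Real.rpow_two]
        exact min_eq_left (Real.rpow_le_rpow_of_exponent_ge hy0 hy.2.le (by linarith))
      simp only [smul_eq_mul]
      rw [this, ← Real.rpow_natCast y (N - 1), hcast]
      rw [show (1 - 2 * s : ℝ) = ((N : ℝ) - 1) + (2 + (-(N : ℝ) - 2 * s)) by ring,
        Real.rpow_add hy0, Real.rpow_add hy0]
      ring
    · rw [integrableOn_Ici_iff_integrableOn_Ioi]
      have h0 : IntegrableOn (fun y : ℝ => G * y ^ (γ - 1 - 2 * s)) (Ioi 1) :=
        (integrableOn_Ioi_rpow_of_lt (by linarith) one_pos).const_mul G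
      refine h0.congr_fun (fun y hy => ?_) measurableSet_Ioi
      have hy0 : 0 < y := zero_lt_one.trans hy
      have : min (y ^ 2) (y ^ γ) = y ^ γ := by
        rw [← Real.rpow_two]
        exact min_eq_right (Real.rpow_le_rpow_of_exponent_le (le_of_lt hy) (by linarith))
      simp only [smul_eq_mul]
      rw [this, ← Real.rpow_natCast y (N - 1), hcast]
      rw [show (γ - 1 - 2 * s : ℝ) = ((N : ℝ) - 1) + (γ + (-(N : ℝ) - 2 * s)) by ring,
        Real.rpow_add hy0, Real.rpow_add hy0]
      ring
  refine key.mono' ((wgt_measurable γ).mul (levyKernel_measurable hg)).aestronglyMeasurable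
    (ae_of_all _ fun z => ?_)
  rw [Real.norm_of_nonneg (mul_nonneg (wgt_nonneg _ _) (levyKernel_nonneg hg hs z))]
  exact mul_le_mul_of_nonneg_left (hG z) (wgt_nonneg _ _)

/-- Away from the origin the kernel is integrable against functions of linear growth. -/
lemma integrableOn_far {N : ℕ} {s γ : ℝ} {g : EN N → ℝ} (hg : H1 N g) (hs : 0 < s)
    (hγ1 : 1 < γ) (hγ2 : γ < 2)
    (hI : Integrable (fun z : EN N => wgt γ z * levyKernel N s g z))
    {r : ℝ} (hr : 0 < r) (hr1 : r ≤ 1) {h : EN N → ℝ} (hm : Measurable h) {B : ℝ}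
    (hB : ∀ z, |h z| ≤ B * (1 + ‖z‖)) :
    IntegrableOn (fun z => h z * levyKernel N s g z) {z : EN N | r < ‖z‖} := by
  have hB0 : 0 ≤ B := by have := (abs_nonneg _).trans (hB 0); simpa using this
  have hint : IntegrableOn (fun z : EN N => (B * (2 * (r ^ 2)⁻¹)) * (wgt γ z * levyKernel N s g z))
      {z : EN N | r < ‖z‖} := (hI.const_mul _).integrableOn
  refine hint.mono' ((hm.mul (levyKernel_measurable hg)).aestronglyMeasurable) ?_
  refine (ae_restrict_iff' (measurableSet_lt measurable_const measurable_norm)).2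
    (ae_of_all _ fun z hz => ?_)
  have hz : r < ‖z‖ := hz
  have hk := levyKernel_nonneg hg hs z
  rw [norm_mul, Real.norm_of_nonneg hk, ← mul_assoc]
  refine mul_le_mul_of_nonneg_right ((hB z).trans ?_) hk
  rw [mul_assoc]
  refine mul_le_mul_of_nonneg_left ?_ hB0
  rw [mul_assoc, ← div_eq_inv_mul]
  have hr2 : 0 < r ^ 2 := by positivity
  rcases le_total ‖z‖ 1 with h1 | h1
  · rw [wgt_of_le hγ1 hγ2 h1]
    have : 1 ≤ ‖z‖ ^ 2 / r ^ 2 := by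
      rw [one_le_div hr2]; gcongr
    linarith
  · rw [wgt_of_ge hγ2 h1]
    have h3 : ‖z‖ ≤ ‖z‖ ^ γ := Real.self_le_rpow_of_one_le h1 hγ1.le
    have : ‖z‖ ^ γ ≤ ‖z‖ ^ γ / r ^ 2 := by
      rw [le_div_iff₀ hr2]
      have : r ^ 2 ≤ 1 := pow_le_one₀ hr.le hr1
      nlinarith [Real.rpow_nonneg (norm_nonneg z) γ]
    linarith

/-- Linear functions integrate to zero against the even kernel on the symmetric set `|z| > r`. -/
lemma integral_odd_eq_zero {N : ℕ} {s : ℝ} {g : EN N → ℝ} (hg : H1 N g) (l : EN N →L[ℝ] ℝ) (r : ℝ) :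
    ∫ z in {z : EN N | r < ‖z‖}, l z * levyKernel N s g z = 0 := by
  have hS : MeasurableSet {z : EN N | r < ‖z‖} := measurableSet_lt measurable_const measurable_norm
  rw [← integral_indicator hS]
  set F := indicator {z : EN N | r < ‖z‖} (fun z => l z * levyKernel N s g z) with hF
  have h1 : ∀ z, F (-z) = - F z := by
    intro z
    simp only [hF, indicator_apply, mem_ofPred_eq, norm_neg, levyKernel_neg hg, map_neg]
    split_ifs <;> ring
  have h2 : ∫ z, F (-z) = ∫ z, F z := integral_neg_eq_self F volume
  simp_rw [h1] at h2
  rw [integral_neg] at h2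
  linarith

lemma near_integrable {N : ℕ} {s γ : ℝ} {g : EN N → ℝ}
    (hγ1 : 1 < γ) (hγ2 : γ < 2)
    (hI : Integrable (fun z : EN N => wgt γ z * levyKernel N s g z)) {r : ℝ} (hr1 : r ≤ 1) :
    IntegrableOn (fun z : EN N => ‖z‖ ^ 2 * levyKernel N s g z) {z : EN N | ‖z‖ ≤ r} := by
  refine hI.integrableOn.congr_fun (fun z hz => ?_)
    (measurableSet_le measurable_norm measurable_const)
  have hz : ‖z‖ ≤ r := hz
  simp only [wgt_of_le hγ1 hγ2 (hz.trans hr1)]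

/-- The second moment of the kernel near the origin tends to zero with the radius, so the singular
part of the operator tested on a fixed `C²` function is negligible. -/
lemma near_small {N : ℕ} {s γ : ℝ} {g : EN N → ℝ}
    (hγ1 : 1 < γ) (hγ2 : γ < 2)
    (hI : Integrable (fun z : EN N => wgt γ z * levyKernel N s g z)) {η : ℝ} (hη : 0 < η) :
    ∃ r : ℝ, 0 < r ∧ r ≤ 1 ∧
      ∫ z in {z : EN N | ‖z‖ ≤ r}, ‖z‖ ^ 2 * levyKernel N s g z ≤ η := by
  have hmeas : ∀ n : ℕ, MeasurableSet {z : EN N | ‖z‖ ≤ 1 / ((n : ℝ) + 1)} :=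
    fun n => measurableSet_le measurable_norm measurable_const
  have hanti : Antitone (fun n : ℕ => {z : EN N | ‖z‖ ≤ 1 / ((n : ℝ) + 1)}) := by
    intro n m hnm z hz
    exact le_trans (show ‖z‖ ≤ 1 / ((m : ℝ) + 1) from hz) (Nat.one_div_le_one_div hnm)
  have hle : ∀ n : ℕ, 1 / ((n : ℝ) + 1) ≤ 1 := fun n => by
    rw [div_le_one (by positivity)]; linarith [(Nat.cast_nonneg n : (0 : ℝ) ≤ n)]
  have h := tendsto_setIntegral_of_antitone (μ := volume)
    (f := fun z : EN N => ‖z‖ ^ 2 * levyKernel N s g z) hmeas hanti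
    ⟨0, near_integrable hγ1 hγ2 hI (hle 0)⟩
  have h0 : ⋂ n : ℕ, {z : EN N | ‖z‖ ≤ 1 / ((n : ℝ) + 1)} = {0} := by
    ext z
    simp only [mem_iInter, mem_ofPred_eq, mem_singleton_iff]
    constructor
    · intro hz
      have := ge_of_tendsto' tendsto_one_div_add_atTop_nhds_zero_nat hz
      exact norm_le_zero_iff.1 this
    · rintro rfl n
      simp only [norm_zero]; positivity
  have h1 : ∫ z in ({0} : Set (EN N)), ‖z‖ ^ 2 * levyKernel N s g z = 0 :=
    setIntegral_eq_zero_of_forall_eq_zero (fun z hz => by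
      rw [mem_singleton_iff.1 hz]; simp)
  rw [h0, h1] at h
  obtain ⟨n, hn⟩ := (h.eventually (gt_mem_nhds hη)).exists
  exact ⟨1 / ((n : ℝ) + 1), by positivity, hle n, hn.le⟩

/-- One-sided bound for `I^{1,r}`; no integrability of the increment of `φ` is needed, since the
junk value `0` of a divergent integral also satisfies it. -/
lemma levyI1_le {N : ℕ} {s : ℝ} {g : EN N → ℝ} (hg : H1 N g) (hs : 0 < s) {φ : EN N → ℝ} {r : ℝ}
    {x : EN N} {E : EN N → ℝ} (hE0 : ∀ z, 0 ≤ E z)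
    (hE : IntegrableOn (fun z => E z * levyKernel N s g z) {z : EN N | ‖z‖ ≤ r})
    (h : ∀ z, ‖z‖ ≤ r → φ (x + z) - φ x - fderiv ℝ φ x z ≤ E z) :
    levyI1 N s g φ r x ≤ ∫ z in {z : EN N | ‖z‖ ≤ r}, E z * levyKernel N s g z := by
  unfold levyI1
  by_cases hi : IntegrableOn (fun z => (φ (x + z) - φ x - fderiv ℝ φ x z) * levyKernel N s g z)
      {z : EN N | ‖z‖ ≤ r}
  · exact setIntegral_mono_on hi hE (measurableSet_le measurable_norm measurable_const)
      (fun z hz => mul_le_mul_of_nonneg_right (h z hz) (levyKernel_nonneg hg hs z))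
  · rw [integral_undef hi]
    exact integral_nonneg fun z => mul_nonneg (hE0 z) (levyKernel_nonneg hg hs z)

lemma levyI1_neg {N : ℕ} {s : ℝ} {g : EN N → ℝ} (φ : EN N → ℝ) (r : ℝ) (x : EN N) :
    levyI1 N s g (fun y => - φ y) r x = - levyI1 N s g φ r x := by
  unfold levyI1
  rw [← integral_neg]
  refine integral_congr_ae (ae_of_all _ fun z => ?_)
  simp only [fderiv_fun_neg, neg_apply]
  ring

lemma levyI2_neg {N : ℕ} {s : ℝ} {g : EN N → ℝ} (φ : EN N → ℝ) (r : ℝ) (x : EN N) :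
    levyI2 N s g (fun y => - φ y) r x = - levyI2 N s g φ r x := by
  unfold levyI2
  rw [← integral_neg]
  refine integral_congr_ae (ae_of_all _ fun z => ?_)
  ring

/-! ### The penalisation and its increments -/

/-- The smooth penalisation `(1 + |x|²)^{c/2}`, of growth `|x|^c` at infinity. -/
noncomputable def jap {N : ℕ} (c : ℝ) (x : EN N) : ℝ := (1 + ‖x‖ ^ 2) ^ (c / 2)

/-- The derivative of `jap c`. -/
noncomputable def japD {N : ℕ} (c : ℝ) (x : EN N) : EN N →L[ℝ] ℝ :=
  (c * (1 + ‖x‖ ^ 2) ^ (c / 2 - 1)) • innerSL ℝ x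

lemma jap_base {N : ℕ} (x : EN N) : 1 ≤ 1 + ‖x‖ ^ 2 := by nlinarith [sq_nonneg ‖x‖]

lemma jap_contDiff {N : ℕ} (c : ℝ) : ContDiff ℝ 2 (jap c : EN N → ℝ) := by
  unfold jap
  refine ContDiff.rpow_const_of_ne (contDiff_const.add (contDiff_norm_sq ℝ)) (fun x => ?_)
  linarith [jap_base x]

lemma jap_hasFDerivAt {N : ℕ} (c : ℝ) (x : EN N) : HasFDerivAt (jap c) (japD c x) x := by
  have h1 : HasFDerivAt (fun x : EN N => 1 + ‖x‖ ^ 2) (2 • innerSL ℝ x) x :=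
    (hasStrictFDerivAt_norm_sq x).hasFDerivAt.const_add 1
  have h2 := h1.rpow_const (p := c / 2) (Or.inl (by linarith [jap_base x]))
  refine h2.congr_fderiv ?_
  unfold japD
  ext z
  simp
  ring

lemma one_le_jap {N : ℕ} {c : ℝ} (hc : 0 ≤ c) (x : EN N) : 1 ≤ jap c x :=
  Real.one_le_rpow (jap_base x) (by linarith)

lemma rpow_le_jap {N : ℕ} {c : ℝ} (hc : 0 ≤ c) (x : EN N) : ‖x‖ ^ c ≤ jap c x := by
  unfold jap
  have : ‖x‖ ^ c = (‖x‖ ^ 2) ^ (c / 2) := by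
    rw [← Real.rpow_natCast, ← Real.rpow_mul (norm_nonneg _)]
    congr 1; push_cast; ring
  rw [this]
  exact Real.rpow_le_rpow (by positivity) (by linarith) (by linarith)

lemma norm_le_jap {N : ℕ} {c : ℝ} (hc : 1 ≤ c) (x : EN N) : ‖x‖ ≤ jap c x := by
  rcases le_total ‖x‖ 1 with h | h
  · exact h.trans (one_le_jap (by linarith) x)
  · exact (Real.self_le_rpow_of_one_le h hc).trans (rpow_le_jap (by linarith) x)

lemma jap_le {N : ℕ} {c : ℝ} (hc : c ≤ 2) (x : EN N) : jap c x ≤ 1 + ‖x‖ ^ 2 := by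
  unfold jap
  calc (1 + ‖x‖ ^ 2) ^ (c / 2) ≤ (1 + ‖x‖ ^ 2) ^ (1 : ℝ) :=
        Real.rpow_le_rpow_of_exponent_le (jap_base x) (by linarith)
    _ = _ := Real.rpow_one _

/-- Concavity of `q ↦ q^{c/2}` bounds the second order increment of `jap c` from above. -/
lemma jap_add_le_sq {N : ℕ} {c : ℝ} (hc0 : 0 ≤ c) (hc : c ≤ 2) (y z : EN N) :
    jap c (y + z) - jap c y - japD c y z ≤ ‖z‖ ^ 2 := by
  set q := 1 + ‖y‖ ^ 2 with hq
  have hq1 : 1 ≤ q := jap_base y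
  have hq0 : 0 < q := by linarith
  set h := 2 * ⟪y, z⟫ + ‖z‖ ^ 2 with hh
  have e1 : 1 + ‖y + z‖ ^ 2 = q * (1 + h / q) := by
    rw [norm_add_sq_real]; field_simp; ring
  have hnn : 0 ≤ 1 + h / q := by
    have : 0 ≤ q * (1 + h / q) := by rw [← e1]; positivity
    exact nonneg_of_mul_nonneg_right this hq0
  have e2 : jap c (y + z) ≤ q ^ (c / 2) * (1 + c / 2 * (h / q)) := by
    unfold jap
    rw [e1, Real.mul_rpow hq0.le hnn]
    exact mul_le_mul_of_nonneg_left
      (rpow_one_add_le_one_add_mul_self (by linarith) (by linarith) (by linarith))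
      (Real.rpow_nonneg hq0.le _)
  have e3 : q ^ (c / 2) * (h / q) = q ^ (c / 2 - 1) * h := by
    rw [Real.rpow_sub hq0, Real.rpow_one]; ring
  have e4 : japD c y z = c * q ^ (c / 2 - 1) * ⟪y, z⟫ := by
    simp [japD, hq]
  have e5 : jap c y = q ^ (c / 2) := rfl
  have e6 : q ^ (c / 2 - 1) ≤ 1 := Real.rpow_le_one_of_one_le_of_nonpos hq1 (by linarith)
  have e7 : 0 ≤ q ^ (c / 2 - 1) := Real.rpow_nonneg hq0.le _
  rw [e4, e5]
  have e8 : q ^ (c / 2) * (1 + c / 2 * (h / q)) =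
      q ^ (c / 2) + c / 2 * (q ^ (c / 2 - 1) * h) := by rw [← e3]; ring
  have e9 : c / 2 * (q ^ (c / 2 - 1)) * ‖z‖ ^ 2 ≤ 1 * ‖z‖ ^ 2 := by
    refine mul_le_mul_of_nonneg_right ?_ (by positivity)
    calc c / 2 * (q ^ (c / 2 - 1)) ≤ 1 * 1 := by
          apply mul_le_mul _ e6 e7 zero_le_one; linarith
      _ = 1 := by norm_num
  rw [e8, hh] at e2
  linarith

lemma jap_add_le {N : ℕ} {c : ℝ} (hc0 : 0 ≤ c) (hc : c ≤ 2) (y z : EN N) :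
    jap c (y + z) ≤ 2 * jap c y + 2 * ‖z‖ ^ c := by
  have h1 : 1 + ‖y + z‖ ^ 2 ≤ 2 * (1 + ‖y‖ ^ 2) + 2 * ‖z‖ ^ 2 := by
    have := norm_add_le y z
    nlinarith [sq_nonneg (‖y‖ - ‖z‖), norm_nonneg y, norm_nonneg z, norm_nonneg (y + z)]
  have h2 : (2 : ℝ) ^ (c / 2) ≤ 2 := by
    calc (2 : ℝ) ^ (c / 2) ≤ 2 ^ (1 : ℝ) :=
          Real.rpow_le_rpow_of_exponent_le (by norm_num) (by linarith)
      _ = 2 := Real.rpow_one _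
  have h3 : (‖z‖ ^ 2) ^ (c / 2) = ‖z‖ ^ c := by
    rw [← Real.rpow_natCast, ← Real.rpow_mul (norm_nonneg _)]
    congr 1; push_cast; ring
  calc jap c (y + z) ≤ (2 * (1 + ‖y‖ ^ 2) + 2 * ‖z‖ ^ 2) ^ (c / 2) :=
        Real.rpow_le_rpow (by positivity) h1 (by linarith)
    _ ≤ (2 * (1 + ‖y‖ ^ 2)) ^ (c / 2) + (2 * ‖z‖ ^ 2) ^ (c / 2) :=
        Real.rpow_add_le_add_rpow (by positivity) (by positivity) (by linarith) (by linarith)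
    _ = 2 ^ (c / 2) * jap c y + 2 ^ (c / 2) * ‖z‖ ^ c := by
        rw [Real.mul_rpow (by norm_num) (by positivity),
          Real.mul_rpow (by norm_num) (by positivity), h3]; rfl
    _ ≤ _ := by
        have : 0 ≤ jap c y := by linarith [one_le_jap hc0 y]
        gcongr

lemma norm_japD_le {N : ℕ} {c : ℝ} (hc0 : 0 ≤ c) (hc : c ≤ 2) (y : EN N) :
    ‖japD c y‖ ≤ 2 * jap c y := by
  have hq1 := jap_base y
  have hq0 : 0 < 1 + ‖y‖ ^ 2 := by linarith
  unfold japD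
  rw [norm_smul, innerSL_apply_norm, Real.norm_of_nonneg (by positivity)]
  have h1 : ‖y‖ ≤ 1 + ‖y‖ ^ 2 := by nlinarith [sq_nonneg (‖y‖ - 1)]
  have h2 : (1 + ‖y‖ ^ 2) ^ (c / 2 - 1) * (1 + ‖y‖ ^ 2) = jap c y := by
    unfold jap
    rw [Real.rpow_sub hq0, Real.rpow_one, div_mul_cancel₀ _ hq0.ne']
  calc c * (1 + ‖y‖ ^ 2) ^ (c / 2 - 1) * ‖y‖
      ≤ 2 * (1 + ‖y‖ ^ 2) ^ (c / 2 - 1) * (1 + ‖y‖ ^ 2) := by gcongr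
    _ = 2 * jap c y := by rw [mul_assoc, h2]

/-- The increments of `jap γ` are controlled by the integrable weight, with a factor `jap γ y`
that makes the bound usable in a Grönwall argument. -/
lemma jap_add_le_wgt {N : ℕ} {γ : ℝ} (h1 : 1 < γ) (h2 : γ < 2) (y z : EN N) :
    jap γ (y + z) - jap γ y - japD γ y z ≤ 5 * jap γ y * wgt γ z := by
  have hj := one_le_jap (c := γ) (by linarith) y
  rcases le_total ‖z‖ 1 with h | h
  · rw [wgt_of_le h1 h2 h]
    have := jap_add_le_sq (c := γ) (by linarith) h2.le y z
    nlinarith [sq_nonneg ‖z‖]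
  · rw [wgt_of_ge h2 h]
    have a := jap_add_le (c := γ) (by linarith) h2.le y z
    have b := (japD γ y).le_opNorm z
    have c := norm_japD_le (c := γ) (by linarith) h2.le y
    have d : ‖z‖ ≤ ‖z‖ ^ γ := Real.self_le_rpow_of_one_le h h1.le
    have e : -(japD γ y z) ≤ ‖japD γ y z‖ := neg_le_abs _
    have f : ‖japD γ y‖ * ‖z‖ ≤ 2 * jap γ y * ‖z‖ ^ γ := by gcongr
    nlinarith

lemma norm_japD_one_le {N : ℕ} (y : EN N) : ‖japD 1 y‖ ≤ 1 := by
  have hq1 := jap_base y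
  have hq0 : 0 < 1 + ‖y‖ ^ 2 := by linarith
  unfold japD
  rw [norm_smul, innerSL_apply_norm, Real.norm_of_nonneg (by positivity)]
  rw [show (1 / 2 - 1 : ℝ) = -(1 / 2) by norm_num, Real.rpow_neg hq0.le, ← Real.sqrt_eq_rpow,
    one_mul, ← div_eq_inv_mul, div_le_one (Real.sqrt_pos.2 hq0)]
  exact Real.le_sqrt_of_sq_le (by linarith)

lemma jap_one_lip {N : ℕ} (x y : EN N) : |jap 1 y - jap 1 x| ≤ ‖y - x‖ := by
  have := Convex.norm_image_sub_le_of_norm_hasFDerivWithin_le (𝕜 := ℝ) (f := jap 1)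
    (f' := fun x : EN N => japD 1 x) (C := 1) (s := univ) (x := x) (y := y)
    (fun x _ => (jap_hasFDerivAt 1 x).hasFDerivWithinAt) (fun x _ => norm_japD_one_le x)
    convex_univ (mem_univ _) (mem_univ _)
  simpa using this

lemma jap_one_add_le_wgt {N : ℕ} {γ : ℝ} (h1 : 1 < γ) (h2 : γ < 2) (y z : EN N) :
    jap 1 (y + z) - jap 1 y - japD 1 y z ≤ 2 * wgt γ z := by
  rcases le_total ‖z‖ 1 with h | h
  · rw [wgt_of_le h1 h2 h]
    have := jap_add_le_sq (c := 1) (by linarith) (by norm_num) y z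
    nlinarith [sq_nonneg ‖z‖]
  · rw [wgt_of_ge h2 h]
    have a := (le_abs_self _).trans (jap_one_lip y (y + z))
    rw [add_sub_cancel_left] at a
    have b := (japD 1 y).le_opNorm z
    have c := norm_japD_one_le y
    have d : ‖z‖ ≤ ‖z‖ ^ γ := Real.self_le_rpow_of_one_le h h1.le
    have e : -(japD 1 y z) ≤ ‖japD 1 y z‖ := neg_le_abs _
    nlinarith [norm_nonneg z]

/-- The `W^{2,∞}` bound on `u₀` gives `|z|²` for small `z`; for large `z` the Lipschitz bound gives a
linear function, dominated by `|z|^γ` because `γ > 1`. -/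
lemma datum_add_le_wgt {N : ℕ} {γ M : ℝ} (h1 : 1 < γ) (h2 : γ < 2) {u₀ : EN N → ℝ}
    (hc : ContDiff ℝ 2 u₀)
    (hM : ∀ x, |u₀ x| ≤ M ∧ ‖fderiv ℝ u₀ x‖ ≤ M ∧ ‖fderiv ℝ (fderiv ℝ u₀) x‖ ≤ M) (y z : EN N) :
    u₀ (y + z) - u₀ y - fderiv ℝ u₀ y z ≤ 3 * M * wgt γ z := by
  have hM0 : 0 ≤ M := (abs_nonneg _).trans (hM 0).1
  rcases le_total ‖z‖ 1 with h | h
  · rw [wgt_of_le h1 h2 h]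
    have hd1 : Differentiable ℝ u₀ := hc.differentiable (by norm_num)
    have hd2 : Differentiable ℝ (fderiv ℝ u₀) :=
      (hc.fderiv_right (m := 1) (by norm_num)).differentiable (by norm_num)
    have hl : ∀ x ∈ closedBall y ‖z‖, ‖fderiv ℝ u₀ x - fderiv ℝ u₀ y‖ ≤ M * ‖z‖ := by
      intro x hx
      refine (Convex.norm_image_sub_le_of_norm_fderiv_le (𝕜 := ℝ) (s := univ)
        (fun x _ => hd2 x) (fun x _ => (hM x).2.2) convex_univ (mem_univ y) (mem_univ x)).trans ?_
      have : ‖x - y‖ ≤ ‖z‖ := by simpa [dist_eq_norm] using hx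
      gcongr
    have := Convex.norm_image_sub_le_of_norm_fderiv_le' (𝕜 := ℝ) (f := u₀)
      (fun x _ => hd1 x) hl (convex_closedBall y ‖z‖)
      (mem_closedBall_self (norm_nonneg z)) (show y + z ∈ closedBall y ‖z‖ by simp)
    rw [add_sub_cancel_left] at this
    have := (le_abs_self _).trans this
    nlinarith [mul_nonneg hM0 (sq_nonneg ‖z‖)]
  · rw [wgt_of_ge h2 h]
    have a := (abs_le.1 (hM (y + z)).1).2
    have a' := (abs_le.1 (hM y).1).1
    have b := (fderiv ℝ u₀ y).le_opNorm z
    have d : ‖z‖ ≤ ‖z‖ ^ γ := Real.self_le_rpow_of_one_le h h1.le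
    have e : -(fderiv ℝ u₀ y z) ≤ ‖fderiv ℝ u₀ y z‖ := neg_le_abs _
    have f : ‖fderiv ℝ u₀ y‖ * ‖z‖ ≤ M * ‖z‖ ^ γ := by
      have := (hM y).2.1
      gcongr
    nlinarith

lemma datum_lip {N : ℕ} {M : ℝ} {u₀ : EN N → ℝ} (hc : ContDiff ℝ 2 u₀)
    (hM : ∀ x, |u₀ x| ≤ M ∧ ‖fderiv ℝ u₀ x‖ ≤ M ∧ ‖fderiv ℝ (fderiv ℝ u₀) x‖ ≤ M) (x y : EN N) :
    u₀ y - u₀ x ≤ M * ‖y - x‖ :=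
  (le_abs_self _).trans (Convex.norm_image_sub_le_of_norm_fderiv_le (𝕜 := ℝ) (s := univ)
        (fun x _ => (hc.differentiable (by norm_num)) x) (fun x _ => (hM x).2.1) convex_univ
        (mem_univ x) (mem_univ y))

/-! ### Far field, existence of maxima, barriers -/

lemma measSet_le {N : ℕ} (r : ℝ) : MeasurableSet {z : EN N | ‖z‖ ≤ r} :=
  measurableSet_le measurable_norm measurable_const

lemma measSet_gt {N : ℕ} (r : ℝ) : MeasurableSet {z : EN N | r < ‖z‖} :=
  measurableSet_lt measurable_const measurable_norm

/-- A one-sided affine-plus-weight bound on an increment bounds its far integral: the linear part `l`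
integrates to zero because the kernel is even. -/
lemma far_le {N : ℕ} {s γ : ℝ} {g : EN N → ℝ} (hg : H1 N g) (hs : 0 < s)
    (hγ1 : 1 < γ) (hγ2 : γ < 2)
    (hI : Integrable (fun z : EN N => wgt γ z * levyKernel N s g z))
    {r : ℝ} (hr : 0 < r) (hr1 : r ≤ 1) {h : EN N → ℝ} (hm : Measurable h) {B : ℝ}
    (hB : ∀ z, |h z| ≤ B * (1 + ‖z‖)) (l : EN N →L[ℝ] ℝ) {c : ℝ}
    (hl : ∀ z, r < ‖z‖ → h z ≤ l z + c * wgt γ z) :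
    ∫ z in {z : EN N | r < ‖z‖}, h z * levyKernel N s g z ≤
      c * ∫ z in {z : EN N | r < ‖z‖}, wgt γ z * levyKernel N s g z := by
  have i1 := integrableOn_far hg hs hγ1 hγ2 hI hr hr1 hm hB
  have i2 : IntegrableOn (fun z => l z * levyKernel N s g z) {z : EN N | r < ‖z‖} := by
    refine integrableOn_far hg hs hγ1 hγ2 hI hr hr1 l.continuous.measurable (B := ‖l‖) (fun z => ?_)
    have := l.le_opNorm z
    rw [Real.norm_eq_abs] at this
    nlinarith [norm_nonneg l]
  have i3 : IntegrableOn (fun z => c * (wgt γ z * levyKernel N s g z)) {z : EN N | r < ‖z‖} :=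
    (hI.const_mul c).integrableOn
  calc ∫ z in {z : EN N | r < ‖z‖}, h z * levyKernel N s g z
      ≤ ∫ z in {z : EN N | r < ‖z‖},
          (l z * levyKernel N s g z + c * (wgt γ z * levyKernel N s g z)) := by
        refine setIntegral_mono_on i1 (i2.add i3) (measSet_gt r) (fun z hz => ?_)
        have := mul_le_mul_of_nonneg_right (hl z hz) (levyKernel_nonneg hg hs z)
        linarith
    _ = _ := by
        rw [integral_add i2 i3, integral_odd_eq_zero hg, zero_add, integral_const_mul]

lemma near_add_far {N : ℕ} {s γ : ℝ} {g : EN N → ℝ}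
    (hI : Integrable (fun z : EN N => wgt γ z * levyKernel N s g z)) (r : ℝ) :
    (∫ z in {z : EN N | ‖z‖ ≤ r}, wgt γ z * levyKernel N s g z) +
      (∫ z in {z : EN N | r < ‖z‖}, wgt γ z * levyKernel N s g z) =
      ∫ z, wgt γ z * levyKernel N s g z := by
  have : {z : EN N | r < ‖z‖} = {z : EN N | ‖z‖ ≤ r}ᶜ := by
    ext z; simp
  rw [this]
  exact integral_add_compl (measSet_le r) hI

lemma slice_continuous {N : ℕ} {u : ℝ → EN N → ℝ}
    (hu : ContinuousOn (fun q : ℝ × EN N => u q.1 q.2) (Ici 0 ×ˢ univ)) {t : ℝ} (ht : 0 ≤ t) :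
    Continuous (u t) := by
  have : ContinuousOn (fun x : EN N => u t x) univ :=
    hu.comp (f := fun x : EN N => (t, x)) (by fun_prop) (fun x _ => ⟨ht, mem_univ _⟩)
  exact continuousOn_univ.1 this

/-- For continuous functions the bound on positive times extends to the time `0`. -/
lemma bdd_Icc {N : ℕ} {u : ℝ → EN N → ℝ}
    (hu : ContinuousOn (fun q : ℝ × EN N => u q.1 q.2) (Ici 0 ×ˢ univ)) (hb : LocBddPos N u)
    {T : ℝ} (hT : 0 < T) : ∃ B, 0 ≤ B ∧ ∀ t ∈ Icc (0 : ℝ) T, ∀ x, |u t x| ≤ B := by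
  obtain ⟨B, hB⟩ := hb T hT
  refine ⟨B, (abs_nonneg _).trans (hB T ⟨hT, le_rfl⟩ 0), fun t ht x => ?_⟩
  rcases ht.1.eq_or_lt with h | h
  · subst h
    have hc : ContinuousWithinAt (fun t => |u t x|) (Ici 0) 0 := by
      have : ContinuousOn (fun t : ℝ => u t x) (Ici 0) :=
        hu.comp (f := fun t : ℝ => (t, x)) (by fun_prop) (fun t ht => ⟨ht, mem_univ _⟩)
      exact (this 0 self_mem_Ici).abs
    have hc' : Tendsto (fun t => |u t x|) (nhdsWithin 0 (Ioi 0)) (nhds |u 0 x|) :=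
      hc.tendsto.mono_left (nhdsWithin_mono _ Ioi_subset_Ici_self)
    refine le_of_tendsto hc' ?_
    filter_upwards [Ioc_mem_nhdsGT hT] with t ht using hB t ht x
  · exact hB t ⟨h, ht.2⟩ x

/-- A continuous function on a closed set attains its maximum as soon as one of its superlevel sets is
bounded. -/
lemma exists_max_of_coercive {E : Type*} [NormedAddCommGroup E] [ProperSpace E] {S : Set E}
    (hS : IsClosed S) {h : E → ℝ} (hh : ContinuousOn h S) {a₀ : E} (ha₀ : a₀ ∈ S) {R : ℝ}
    (hR : ∀ a ∈ S, h a₀ ≤ h a → ‖a‖ ≤ R) : ∃ a ∈ S, ∀ b ∈ S, h b ≤ h a := by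
  have hK : IsCompact (S ∩ closedBall 0 R) := (isCompact_closedBall 0 R).inter_left hS
  obtain ⟨a, ha, hmax⟩ := hK.exists_isMaxOn
    ⟨a₀, ha₀, by simpa using hR a₀ ha₀ le_rfl⟩ (hh.mono inter_subset_left)
  refine ⟨a, ha.1, fun b hb => ?_⟩
  rcases le_total (h a₀) (h b) with h1 | h1
  · exact hmax ⟨hb, by simpa using hR b hb h1⟩
  · exact h1.trans (hmax ⟨ha₀, by simpa using hR a₀ ha₀ le_rfl⟩)

lemma pow_deriv_nonneg {T t : ℝ} (hT : 0 < T) (ht : 0 ≤ t) (n : ℕ) :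
    HasDerivAt (fun t : ℝ => (t / T) ^ n) (n * (t / T) ^ (n - 1) * (1 / T)) t ∧
      0 ≤ n * (t / T) ^ (n - 1) * (1 / T) :=
  ⟨((hasDerivAt_id t).div_const T).pow n, by positivity⟩

/-- A subsolution whose nonlinearity is at most `C` near gradients and nonlocal terms of the size of
those of the datum stays below `u₀ + (C + 1) t`. -/
lemma barrier {N : ℕ} {s γ : ℝ} {g : EN N → ℝ} (hg : H1 N g) (hs : 0 < s)
    (hγ1 : 1 < γ) (hγ2 : γ < 2)
    (hI : Integrable (fun z : EN N => wgt γ z * levyKernel N s g z))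
    {F : ℝ → EN N → ℝ → (EN N →L[ℝ] ℝ) → ℝ → ℝ} {u₀ : EN N → ℝ} {u : ℝ → EN N → ℝ} {M C : ℝ}
    (hc : ContDiff ℝ 2 u₀)
    (hM : ∀ x, |u₀ x| ≤ M ∧ ‖fderiv ℝ u₀ x‖ ≤ M ∧ ‖fderiv ℝ (fderiv ℝ u₀) x‖ ≤ M)
    (hu : ContinuousOn (fun q : ℝ × EN N => u q.1 q.2) (Ici 0 ×ˢ univ))
    (hsub : IsSubsol N s g F u₀ u)
    (hF : ∀ t x v q I, ‖q‖ ≤ M + 1 → I ≤ (3 * M + 2) * ∫ z, wgt γ z * levyKernel N s g z →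
      F t x v q I ≤ C) {t : ℝ} (ht : 0 ≤ t) (x : EN N) : u t x ≤ u₀ x + (C + 1) * t := by
  by_contra! hcon
  have hM0 : 0 ≤ M := (abs_nonneg _).trans (hM 0).1
  obtain ⟨-, hb, hinit, hv⟩ := hsub
  set T := t + 1 with hT
  have hT0 : 0 < T := by linarith
  obtain ⟨B, hB0, hB⟩ := bdd_Icc hu hb (show 0 < T + 1 by linarith)
  set χ : EN N → ℝ := jap 1 with hχ
  have hχ1 : ∀ x, 1 ≤ χ x := fun x => one_le_jap zero_le_one x
  set e := u t x - (u₀ x + (C + 1) * t) with he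
  have he0 : 0 < e := by linarith
  obtain ⟨β, hβ0, hβ1, hβe⟩ : ∃ β : ℝ, 0 < β ∧ β ≤ 1 ∧ β * (χ x + 1) < e := by
    refine ⟨min 1 (e / (2 * (χ x + 1))), ?_, min_le_left _ _, ?_⟩
    · have := hχ1 x
      exact lt_min one_pos (by positivity)
    · have := hχ1 x
      calc min 1 (e / (2 * (χ x + 1))) * (χ x + 1) ≤ (e / (2 * (χ x + 1))) * (χ x + 1) := by
            gcongr; exact min_le_right _ _
        _ = e / 2 := by field_simp
        _ < e := by linarith
  set D := B + M + |C + 1| * (T + 1) with hD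
  have hD0 : 0 ≤ D := by positivity
  obtain ⟨n, hn⟩ := pow_unbounded_of_one_lt (D / β)
    (show 1 < (T + 1) / T by rw [lt_div_iff₀ hT0]; linarith)
  rw [div_lt_iff₀ hβ0] at hn
  -- the term `β (t / T)ⁿ` is harmless on `[0, T]` and keeps the maximum away from the time `T + 1`
  set φ : ℝ → EN N → ℝ := fun t x => u₀ x + (C + 1) * t + β * χ x + β * (t / T) ^ n with hφ
  have hφc : ContDiff ℝ 2 (fun q : ℝ × EN N => φ q.1 q.2) := by
    have h1 : ContDiff ℝ 2 χ := jap_contDiff 1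
    simp only [hφ]
    fun_prop
  set h : ℝ × EN N → ℝ := fun q => u q.1 q.2 - φ q.1 q.2 with hh
  set S : Set (ℝ × EN N) := Icc 0 (T + 1) ×ˢ univ with hS
  have hScl : IsClosed S := isClosed_Icc.prod isClosed_univ
  have hhc : ContinuousOn h S :=
    (hu.mono (prod_mono Icc_subset_Ici_self subset_rfl)).sub hφc.continuous.continuousOn
  have hpos : 0 < h (t, x) := by
    have h1 : (t / T) ^ n ≤ 1 := pow_le_one₀ (by positivity) (by rw [div_le_one hT0]; linarith)
    simp only [hh, hφ]
    nlinarith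
  -- the penalised difference is bounded by `D` minus the penalisation
  have hup : ∀ q ∈ S, h q ≤ D - β * χ q.2 - β * (q.1 / T) ^ n := by
    intro q hq
    have h1 := (abs_le.1 (hB q.1 hq.1 q.2)).2
    have h2 := (abs_le.1 (hM q.2).1).1
    have h3 : -(|C + 1| * (T + 1)) ≤ (C + 1) * q.1 := by
      have := neg_abs_le ((C + 1) * q.1)
      rw [abs_mul, abs_of_nonneg hq.1.1] at this
      have h4 : |C + 1| * q.1 ≤ |C + 1| * (T + 1) := by gcongr; exact hq.1.2
      linarith
    simp only [hh, hφ]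
    linarith
  obtain ⟨⟨t₁, x₁⟩, hmem, hmax⟩ := exists_max_of_coercive hScl hhc
    (a₀ := (t, x)) ⟨⟨ht, by simp only [hT]; linarith⟩, mem_univ _⟩ (R := max (T + 1) (D / β)) (by
      intro q hq hle
      have h1 := hup q hq
      have h2 : 0 ≤ β * (q.1 / T) ^ n := by have := hq.1.1; positivity
      rw [Prod.norm_def]
      refine max_le_max ?_ ?_
      · rw [Real.norm_of_nonneg hq.1.1]; exact hq.1.2
      · rw [le_div_iff₀ hβ0]
        have := norm_le_jap (c := 1) le_rfl q.2
        nlinarith)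
  have hpos1 : 0 < h (t₁, x₁) := hpos.trans_le
    (hmax (t, x) ⟨⟨ht, by simp only [hT]; linarith⟩, mem_univ _⟩)
  have ht1 : 0 < t₁ := by
    rcases hmem.1.1.eq_or_lt with h0 | h0
    · exfalso
      have h0 : 0 = t₁ := h0
      subst h0
      have := hinit x₁
      have h3 : 0 ≤ β * ((0 : ℝ) / T) ^ n := by positivity
      simp only [hh, hφ] at hpos1
      nlinarith [hχ1 x₁]
    · exact h0
  have ht2 : t₁ < T + 1 := by
    rcases hmem.1.2.eq_or_lt with h0 | h0
    · exfalso
      have h0 : t₁ = T + 1 := h0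
      have := hup (t₁, x₁) hmem
      simp only [h0] at this hpos1
      nlinarith [hχ1 x₁]
    · exact h0
  have hglob : ∀ t' ∈ Icc 0 (T + 1), ∀ x', u t' x' - φ t' x' ≤ u t₁ x₁ - φ t₁ x₁ :=
    fun t' ht' x' => hmax (t', x') ⟨ht', mem_univ _⟩
  have hvisc := hv t₁ x₁ ht1 φ hφc (min t₁ (T + 1 - t₁) / 2) 1
    (by have := lt_min ht1 (sub_pos.2 ht2); linarith)
    (by have := min_le_left t₁ (T + 1 - t₁); linarith) one_pos (by
      intro t' x' ht' _
      have h1 := min_le_left t₁ (T + 1 - t₁)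
      have h2 := min_le_right t₁ (T + 1 - t₁)
      exact hglob t' ⟨by linarith [ht'.1], by linarith [ht'.2]⟩ x')
  have hd := pow_deriv_nonneg hT0 ht1.le n
  have hderiv : deriv (fun t => φ t x₁) t₁ =
      (C + 1) * 1 + β * (n * (t₁ / T) ^ (n - 1) * (1 / T)) := by
    refine HasDerivAt.deriv ?_
    simp only [hφ]
    exact (((hasDerivAt_id t₁).const_mul (C + 1)).const_add (u₀ x₁)).add_const _ |>.add
      (hd.1.const_mul β)
  have hfd : fderiv ℝ (fun x => φ t₁ x) x₁ = fderiv ℝ u₀ x₁ + β • japD 1 x₁ := by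
    refine HasFDerivAt.fderiv ?_
    simp only [hφ]
    exact ((((hc.differentiable (by norm_num)) x₁).hasFDerivAt.add_const _).add
      ((jap_hasFDerivAt 1 x₁).const_mul β)).add_const _
  have hincr : ∀ z, φ t₁ (x₁ + z) - φ t₁ x₁ - fderiv ℝ (fun x => φ t₁ x) x₁ z ≤
      (3 * M + 2) * wgt γ z := by
    intro z
    rw [hfd]
    have h1 := datum_add_le_wgt hγ1 hγ2 hc hM x₁ z
    have h2 := jap_one_add_le_wgt hγ1 hγ2 x₁ z
    have h3 := wgt_nonneg γ z
    simp only [hφ, hχ, add_apply, smul_apply, smul_eq_mul]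
    nlinarith
  have hI1 : levyI1 N s g (fun x => φ t₁ x) 1 x₁ ≤
      ∫ z in {z : EN N | ‖z‖ ≤ 1}, ((3 * M + 2) * wgt γ z) * levyKernel N s g z := by
    refine levyI1_le hg hs (fun z => mul_nonneg (by positivity) (wgt_nonneg _ _)) ?_
      (fun z _ => hincr z)
    simp_rw [mul_assoc]
    exact (hI.const_mul _).integrableOn
  have hI2 : levyI2 N s g (fun x => u t₁ x) 1 x₁ ≤ (3 * M + 2) *
      ∫ z in {z : EN N | 1 < ‖z‖}, wgt γ z * levyKernel N s g z := by
    have hcs := slice_continuous hu ht1.le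
    refine far_le hg hs hγ1 hγ2 hI one_pos le_rfl (by fun_prop) (B := 2 * B) (fun z => ?_)
      (fderiv ℝ (fun x => φ t₁ x) x₁) (fun z _ => ?_)
    · have h1 := abs_le.1 (hB t₁ hmem.1 (x₁ + z))
      have h2 := abs_le.1 (hB t₁ hmem.1 x₁)
      have h3 : 0 ≤ B * ‖z‖ := by positivity
      rw [abs_le]
      constructor <;> nlinarith
    · have h1 := hglob t₁ hmem.1 (x₁ + z)
      have h2 := hincr z
      simp only at h2 ⊢
      linarith
  have hsum := near_add_far hI 1
  simp_rw [mul_assoc] at hI1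
  rw [integral_const_mul] at hI1
  have hFle := hF t₁ x₁ (u t₁ x₁) (fderiv ℝ (fun x => φ t₁ x) x₁)
    (levyI1 N s g (fun x => φ t₁ x) 1 x₁ + levyI2 N s g (fun x => u t₁ x) 1 x₁) (by
      rw [hfd]
      refine (norm_add_le _ _).trans (add_le_add (hM x₁).2.1 ?_)
      rw [norm_smul, Real.norm_of_nonneg hβ0.le]
      exact mul_le_one₀ hβ1 (norm_nonneg _) (norm_japD_one_le x₁)) (by
      rw [← hsum, mul_add]
      linarith)
  rw [hderiv] at hvisc
  have := mul_nonneg hβ0.le hd.2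
  linarith

/-! ### Reflection and blow-up of viscosity subsolutions -/

/-- The viscosity subsolution inequality alone, without semicontinuity, boundedness or datum. -/
def ViscSub (N : ℕ) (s : ℝ) (g : EN N → ℝ)
    (F : ℝ → EN N → ℝ → (EN N →L[ℝ] ℝ) → ℝ → ℝ) (u : ℝ → EN N → ℝ) : Prop :=
  ∀ (t₀ : ℝ) (x₀ : EN N), 0 < t₀ →
    ∀ (φ : ℝ → EN N → ℝ), ContDiff ℝ 2 (fun q : ℝ × EN N => φ q.1 q.2) →
    ∀ τ r : ℝ, 0 < τ → τ < t₀ → 0 < r →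
    (∀ t x, t ∈ Ioo (t₀ - τ) (t₀ + τ) → x ∈ ball x₀ r →
      u t x - φ t x ≤ u t₀ x₀ - φ t₀ x₀) →
    deriv (fun t => φ t x₀) t₀ -
      F t₀ x₀ (u t₀ x₀) (fderiv ℝ (fun x => φ t₀ x) x₀)
        (levyI1 N s g (fun x => φ t₀ x) r x₀ + levyI2 N s g (fun x => u t₀ x) r x₀) ≤ 0

/-- The reflection `u ↦ -u` turns supersolutions into subsolutions of the reflected equation; the
lower inequality of the theorem is reduced to the upper one in this way. -/
lemma IsSupersol.neg {N : ℕ} {s : ℝ} {g : EN N → ℝ}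
    {F G : ℝ → EN N → ℝ → (EN N →L[ℝ] ℝ) → ℝ → ℝ} {u₀ : EN N → ℝ} {u : ℝ → EN N → ℝ}
    (h : IsSupersol N s g F u₀ u) (hG : ∀ t x v q I, G t x v q I = - F t x (-v) (-q) (-I)) :
    IsSubsol N s g G (fun x => - u₀ x) (fun t x => - u t x) := by
  obtain ⟨h1, h2, h3, h4⟩ := h
  refine ⟨fun q hq y hy => ?_, fun T hT => ?_, fun x => neg_le_neg (h3 x), ?_⟩
  · filter_upwards [h1 q hq (-y) (by linarith)] with a ha
    linarith
  · obtain ⟨M, hM⟩ := h2 T hT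
    exact ⟨M, fun t ht x => by rw [abs_neg]; exact hM t ht x⟩
  · intro t₀ x₀ ht φ hφ τ r hτ hτ' hr hmax
    have := h4 t₀ x₀ ht (fun t x => - φ t x) hφ.neg τ r hτ hτ' hr (fun t x ht hx => by
      have := hmax t x ht hx
      linarith)
    rw [hG]
    have e1 : deriv (fun t => - φ t x₀) t₀ = - deriv (fun t => φ t x₀) t₀ := deriv.fun_neg
    have e2 : fderiv ℝ (fun x => - φ t₀ x) x₀ = - fderiv ℝ (fun x => φ t₀ x) x₀ := fderiv_fun_neg
    rw [e1, e2, levyI1_neg] at this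
    rw [levyI2_neg, neg_neg, neg_add, neg_neg]
    linarith

lemma IsSubsol.neg {N : ℕ} {s : ℝ} {g : EN N → ℝ}
    {F G : ℝ → EN N → ℝ → (EN N →L[ℝ] ℝ) → ℝ → ℝ} {u₀ : EN N → ℝ} {u : ℝ → EN N → ℝ}
    (h : IsSubsol N s g F u₀ u) (hG : ∀ t x v q I, G t x v q I = - F t x (-v) (-q) (-I)) :
    IsSupersol N s g G (fun x => - u₀ x) (fun t x => - u t x) := by
  obtain ⟨h1, h2, h3, h4⟩ := h
  refine ⟨fun q hq y hy => ?_, fun T hT => ?_, fun x => neg_le_neg (h3 x), ?_⟩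
  · filter_upwards [h1 q hq (-y) (by linarith)] with a ha
    linarith
  · obtain ⟨M, hM⟩ := h2 T hT
    exact ⟨M, fun t ht x => by rw [abs_neg]; exact hM t ht x⟩
  · intro t₀ x₀ ht φ hφ τ r hτ hτ' hr hmax
    have := h4 t₀ x₀ ht (fun t x => - φ t x) hφ.neg τ r hτ hτ' hr (fun t x ht hx => by
      have := hmax t x ht hx
      linarith)
    rw [hG]
    have e1 : deriv (fun t => - φ t x₀) t₀ = - deriv (fun t => φ t x₀) t₀ := deriv.fun_neg
    have e2 : fderiv ℝ (fun x => - φ t₀ x) x₀ = - fderiv ℝ (fun x => φ t₀ x) x₀ := fderiv_fun_neg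
    rw [e1, e2, levyI1_neg] at this
    rw [levyI2_neg, neg_neg, neg_add, neg_neg]
    linarith

open scoped Pointwise in
/-- The change of variables `z ↦ ε z` in the kernel, which is homogeneous of degree `-N - 2s`. The
predicate `P` covers both the near and the far region. -/
lemma integral_levy_smul {N : ℕ} {s ε : ℝ} {g : EN N → ℝ} (hε : 0 < ε) (P : ℝ → Prop)
    (h : EN N → ℝ) :
    ∫ z in {z : EN N | P (ε⁻¹ * ‖z‖)}, h (ε⁻¹ • z) * levyKernel N s g z =
      ε ^ (-(2 * s)) * ∫ z in {z : EN N | P ‖z‖}, h z * levyKernel N s g z := by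
  have e1 := Measure.setIntegral_comp_smul_of_pos (volume : Measure (EN N))
    (fun z => h (ε⁻¹ • z) * levyKernel N s g z) {z : EN N | P ‖z‖} hε
  have e2 : ε • {z : EN N | P ‖z‖} = {z : EN N | P (ε⁻¹ * ‖z‖)} := by
    ext z
    rw [Set.mem_smul_set_iff_inv_smul_mem₀ hε.ne']
    simp only [mem_ofPred_eq, norm_smul, norm_inv, Real.norm_of_nonneg hε.le]
  rw [e2, finrank_euclideanSpace_fin] at e1
  have e3 : ∀ z : EN N, h (ε⁻¹ • ε • z) * levyKernel N s g (ε • z) =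
      ε ^ (-(N : ℝ) - 2 * s) * (h z * levyKernel N s g z) := by
    intro z
    rw [levyKernel_smul hε, inv_smul_smul₀ hε.ne']
    ring
  simp_rw [e3] at e1
  rw [integral_const_mul, smul_eq_mul] at e1
  have e4 : ε ^ (-(2 * s)) = ε ^ N * ε ^ (-(N : ℝ) - 2 * s) := by
    rw [← Real.rpow_natCast ε N, ← Real.rpow_add hε]
    congr 1; ring
  rw [e4, mul_assoc, e1, ← mul_assoc, mul_inv_cancel₀ (by positivity), one_mul]

/-- Blow-up at scale `ε`: up to translation by a period of the data, the rescaled function solves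
the cell equation. -/
lemma rescale {N : ℕ} {s ε : ℝ} {g : EN N → ℝ} (hε : 0 < ε) {W : ℝ → ℝ} {σ : ℝ → EN N → ℝ}
    {u : ℝ → EN N → ℝ}
    (hu : ViscSub N s g
      (fun t x v _ I => ε ^ (2*s - 1) * I - deriv W (v / ε) + σ (t/ε) (ε⁻¹ • x)) u)
    {m n : ℝ} (hm : 0 ≤ m) {k : EN N} (hσ : ∀ t x, σ (m + t) (k + x) = σ t x)
    (hW : ∀ v, deriv W (v + n) = deriv W v) :
    ViscSub N s g (fun t x v _ I => I - deriv W v + σ t x)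
      (fun τ y => u (ε * (m + τ)) (ε • (k + y)) / ε - n) := by
  intro t₀ x₀ ht φ hφ τ r hτ hτ' hr hmax
  set Φ : ℝ → EN N → ℝ := fun t x => ε * φ (ε⁻¹ * t - m) (ε⁻¹ • x - k) with hΦ
  have hΦc : ContDiff ℝ 2 (fun q : ℝ × EN N => Φ q.1 q.2) := by
    have : ContDiff ℝ 2 (fun q : ℝ × EN N => ((ε⁻¹ * q.1 - m, ε⁻¹ • q.2 - k) : ℝ × EN N)) := by
      fun_prop
    exact contDiff_const.mul (hφ.comp this)
  have hi : ε⁻¹ * ε = 1 := inv_mul_cancel₀ hε.ne'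
  have ht1 : ∀ t, ε⁻¹ * (ε * (m + t)) - m = t := fun t => by rw [← mul_assoc, hi]; ring
  have hx1 : ∀ x : EN N, ε⁻¹ • (ε • (k + x)) - k = x := fun x => by
    rw [smul_smul, hi, one_smul]; abel
  have ht2 : ∀ t, ε * (m + (ε⁻¹ * t - m)) = t := fun t => by
    rw [add_sub_cancel, ← mul_assoc, mul_inv_cancel₀ hε.ne', one_mul]
  have hx2 : ∀ x : EN N, ε • (k + (ε⁻¹ • x - k)) = x := fun x => by
    rw [add_sub_cancel, smul_smul, mul_inv_cancel₀ hε.ne', one_smul]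
  have key := hu (ε * (m + t₀)) (ε • (k + x₀)) (by positivity) Φ hΦc (ε * τ) (ε * r)
    (by positivity) (by nlinarith) (by positivity) (by
      intro t x htt hx
      have h1 := hmax (ε⁻¹ * t - m) (ε⁻¹ • x - k) (by
        have h1 : ε * (m + (ε⁻¹ * t - m)) = t := ht2 t
        constructor
        · have := htt.1
          by_contra! hc
          have := mul_le_mul_of_nonneg_left hc hε.le
          nlinarith
        · have := htt.2
          by_contra! hc
          have := mul_le_mul_of_nonneg_left hc hε.le
          nlinarith) (by
        rw [mem_ball, dist_eq_norm] at hx ⊢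
        have e : x - ε • (k + x₀) = ε • (ε⁻¹ • x - k - x₀) := by
          rw [smul_sub, smul_sub, smul_smul, mul_inv_cancel₀ hε.ne', one_smul, smul_add]; abel
        rw [e, norm_smul, Real.norm_of_nonneg hε.le] at hx
        exact lt_of_mul_lt_mul_left hx hε.le)
      simp only [ht2, hx2] at h1
      simp only [hΦ, ht1, hx1]
      have h2 := mul_le_mul_of_nonneg_left h1 hε.le
      have h3 : ∀ a, ε * (a / ε) = a := fun a => by field_simp
      rw [mul_sub, mul_sub, mul_sub, mul_sub, h3, h3] at h2
      linarith)
  have d1 : deriv (fun t => Φ t (ε • (k + x₀))) (ε * (m + t₀)) = deriv (fun t => φ t x₀) t₀ := by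
    have hd : DifferentiableAt ℝ (fun t => φ t x₀) t₀ := by
      have : ContDiff ℝ 2 (fun t => φ t x₀) :=
        hφ.comp (f := fun t : ℝ => (t, x₀)) (by fun_prop)
      exact this.differentiable (by norm_num) _
    have h2 : HasDerivAt (fun t : ℝ => ε⁻¹ * t - m) (ε⁻¹ * 1) (ε * (m + t₀)) :=
      ((hasDerivAt_id _).const_mul _).sub_const _
    have h3 : HasDerivAt (fun t => φ t x₀) (deriv (fun t => φ t x₀) t₀)
        (ε⁻¹ * (ε * (m + t₀)) - m) := by rw [ht1]; exact hd.hasDerivAt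
    have h4 := (HasDerivAt.comp (h := fun t : ℝ => ε⁻¹ * t - m) (ε * (m + t₀)) h3 h2).const_mul ε
    rw [HasDerivAt.deriv (f := fun t => Φ t (ε • (k + x₀))) (by
      simp only [hΦ, hx1]; exact h4)]
    field_simp
  have d2 : ∀ z, fderiv ℝ (fun x => Φ (ε * (m + t₀)) x) (ε • (k + x₀)) z =
      ε * fderiv ℝ (fun x => φ t₀ x) x₀ (ε⁻¹ • z) := by
    intro z
    have hd : DifferentiableAt ℝ (fun x => φ t₀ x) x₀ := by
      have : ContDiff ℝ 2 (fun x => φ t₀ x) :=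
        hφ.comp (f := fun x : EN N => (t₀, x)) (by fun_prop)
      exact this.differentiable (by norm_num) _
    have h2 : HasFDerivAt (fun x : EN N => ε⁻¹ • x - k) (ε⁻¹ • ContinuousLinearMap.id ℝ (EN N))
        (ε • (k + x₀)) := ((hasFDerivAt_id (𝕜 := ℝ) (ε • (k + x₀))).const_smul ε⁻¹).sub_const k
    have h3 : HasFDerivAt (fun x => φ t₀ x) (fderiv ℝ (fun x => φ t₀ x) x₀)
        (ε⁻¹ • (ε • (k + x₀)) - k) := by rw [hx1]; exact hd.hasFDerivAt
    have h4 := (HasFDerivAt.comp (f := fun x : EN N => ε⁻¹ • x - k) (ε • (k + x₀)) h3 h2).const_mul ε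
    rw [HasFDerivAt.fderiv (f := fun x => Φ (ε * (m + t₀)) x) (by
      simp only [hΦ, ht1]; exact h4)]
    simp
  have hr1 : ∀ z : EN N, ‖z‖ ≤ ε * r ↔ ε⁻¹ * ‖z‖ ≤ r := fun z => by
    rw [inv_mul_le_iff₀ hε]
  have hr2 : ∀ z : EN N, ε * r < ‖z‖ ↔ r < ε⁻¹ * ‖z‖ := fun z => by
    rw [lt_inv_mul_iff₀ hε]
  have hpow : ε ^ (2 * s - 1) * (ε * ε ^ (-(2 * s))) = 1 := by
    nth_rewrite 2 [← Real.rpow_one ε]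
    rw [← Real.rpow_add hε, ← Real.rpow_add hε, show 2 * s - 1 + (1 + -(2 * s)) = 0 by ring,
      Real.rpow_zero]
  have hxz : ∀ z : EN N, ε⁻¹ • (ε • (k + x₀) + z) - k = x₀ + ε⁻¹ • z := fun z => by
    rw [smul_add, add_sub_right_comm, hx1]
  have i1 : levyI1 N s g (fun x => Φ (ε * (m + t₀)) x) (ε * r) (ε • (k + x₀)) =
      ε * ε ^ (-(2 * s)) * levyI1 N s g (fun x => φ t₀ x) r x₀ := by
    unfold levyI1
    rw [mul_assoc, ← integral_levy_smul hε (fun a => a ≤ r)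
      (fun z => φ t₀ (x₀ + z) - φ t₀ x₀ - fderiv ℝ (fun x => φ t₀ x) x₀ z), ← integral_const_mul]
    simp_rw [hr1, d2]
    refine integral_congr_ae (ae_of_all _ fun z => ?_)
    simp only [hΦ, ht1, hx1, hxz]
    ring
  have i2 : levyI2 N s g (fun x => u (ε * (m + t₀)) x) (ε * r) (ε • (k + x₀)) =
      ε * ε ^ (-(2 * s)) * levyI2 N s g (fun y => u (ε * (m + t₀)) (ε • (k + y)) / ε - n) r x₀ := by
    unfold levyI2
    rw [mul_assoc, ← integral_levy_smul hε (fun a => r < a)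
      (fun z => (u (ε * (m + t₀)) (ε • (k + (x₀ + z))) / ε - n) -
        (u (ε * (m + t₀)) (ε • (k + x₀)) / ε - n)), ← integral_const_mul]
    simp_rw [hr2]
    refine integral_congr_ae (ae_of_all _ fun z => ?_)
    have : ε • (k + (x₀ + ε⁻¹ • z)) = ε • (k + x₀) + z := by
      rw [← add_assoc, smul_add _ (k + x₀), smul_smul, mul_inv_cancel₀ hε.ne', one_smul]
    simp only [this]
    field_simp
    ring
  simp only at key ⊢
  rw [d1, i1, i2, ← mul_add, ← mul_assoc, hpow, one_mul] at key
  have e5 : ε * (m + t₀) / ε = m + t₀ := by field_simp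
  have e6 : ε⁻¹ • ε • (k + x₀) = k + x₀ := inv_smul_smul₀ hε.ne' _
  rw [e5, e6, hσ] at key
  have e7 := hW (u (ε * (m + t₀)) (ε • (k + x₀)) / ε - n)
  rw [sub_add_cancel] at e7
  rw [e7] at key
  exact key

/-! ### Quadratic test functions and the doubled viscosity inequality -/

lemma quad_hasFDerivAt {N : ℕ} (δ : ℝ) (c x : EN N) :
    HasFDerivAt (fun x : EN N => ‖x - c‖ ^ 2 / (2 * δ)) ((1 / δ) • innerSL ℝ (x - c)) x := by
  have h := ((hasFDerivAt_id (𝕜 := ℝ) x).sub_const c).norm_sq.const_mul (1 / (2 * δ))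
  refine (h.congr_fderiv ?_).congr_of_eventuallyEq (Eventually.of_forall fun y => ?_)
  · ext z
    simp
    ring
  · simp; ring

lemma quad_incr {N : ℕ} (δ : ℝ) (c x z : EN N) :
    ‖x + z - c‖ ^ 2 / (2 * δ) - ‖x - c‖ ^ 2 / (2 * δ) - ((1 / δ) • innerSL ℝ (x - c)) z =
      ‖z‖ ^ 2 / (2 * δ) := by
  have : x + z - c = (x - c) + z := by abel
  rw [this, norm_add_sq_real]
  simp only [smul_apply, innerSL_apply_apply, smul_eq_mul]
  ring

lemma timequad_hasDerivAt (δ c t : ℝ) :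
    HasDerivAt (fun t : ℝ => (t - c) ^ 2 / (2 * δ)) ((t - c) / δ) t := by
  have h := (((hasDerivAt_id t).sub_const c).pow 2).div_const (2 * δ)
  refine h.congr_deriv ?_
  simp
  ring

/-- Superlinear growth beats linear growth: this confines the maxima of functions of linear growth
penalised by `κ jap γ`. -/
lemma jap_coercive {γ : ℝ} (hγ1 : 1 < γ) {κ : ℝ} (hκ : 0 < κ) (N : ℕ) (C : ℝ) :
    ∃ R : ℝ, ∀ y : EN N, κ * jap γ y ≤ C * jap 1 y → ‖y‖ ≤ R := by
  have h1 : Tendsto (fun x : ℝ => x ^ (γ - 1)) atTop atTop := tendsto_rpow_atTop (by linarith)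
  obtain ⟨R, hR⟩ := (h1.eventually (eventually_gt_atTop (C / κ))).exists_forall_of_atTop
  refine ⟨max R 1, fun y hy => ?_⟩
  by_contra! hc
  set b := (1 + ‖y‖ ^ 2) ^ ((1 : ℝ) / 2) with hb
  have hb0 : 0 ≤ 1 + ‖y‖ ^ 2 := by positivity
  have e1 : jap γ y = b ^ (γ - 1) * b := by
    have hbp : 0 < b := by positivity
    nth_rewrite 2 [← Real.rpow_one b]
    rw [← Real.rpow_add hbp, hb, ← Real.rpow_mul hb0]
    unfold jap; congr 1; ring
  have e2 : jap 1 y = b := rfl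
  have hby : ‖y‖ ≤ b := norm_le_jap le_rfl y
  have hbp : 0 < b := by positivity
  rw [e1, e2, ← mul_assoc] at hy
  have h2 := le_of_mul_le_mul_right hy hbp
  have h3 := hR b ((le_max_left _ _).trans (hc.le.trans hby))
  rw [div_lt_iff₀ hκ] at h3
  linarith

/-- The two viscosity inequalities at an interior maximum of the doubled function, subtracted: the
nonlocal terms cost at most `5 Cm` times the superlinear penalisation plus a term that vanishes with
the inner radius `r`. -/
lemma micro_visc {N : ℕ} {s γ : ℝ} {g : EN N → ℝ} (hg : H1 N g) (hs : 0 < s)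
    (hγ1 : 1 < γ) (hγ2 : γ < 2)
    (hI : Integrable (fun z : EN N => wgt γ z * levyKernel N s g z))
    {W : ℝ → ℝ} {σ : ℝ → EN N → ℝ} {V w : ℝ → EN N → ℝ} {p : EN N}
    (hVc : ContinuousOn (fun q : ℝ × EN N => V q.1 q.2) (Ici 0 ×ˢ univ))
    (hV : ViscSub N s g (fun t x v _ I => I - deriv W v + σ t x) V)
    (hwc : ContinuousOn (fun q : ℝ × EN N => w q.1 q.2) (Ici 0 ×ˢ univ))
    (hw : IsSupersol N s g (cellF N W σ p 0) (fun _ => 0) w)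
    {S B : ℝ} (hVB : ∀ t ∈ Icc 0 S, ∀ x, |V t x| ≤ B) (hwB : ∀ t ∈ Icc 0 S, ∀ x, |w t x| ≤ B)
    {A : ℝ → ℝ} (hA : ContDiff ℝ 2 A) {δ : ℝ} (hδ : 0 < δ) {τ τ' : ℝ} {y y' : EN N}
    (hA0 : 0 ≤ A τ)
    (hτ : τ ∈ Ioo 0 S) (hτ' : τ' ∈ Ioo 0 S)
    (hmax : ∀ t ∈ Icc 0 S, ∀ x, ∀ t' ∈ Icc 0 S, ∀ x',
      V t x - ⟪p, x⟫ - A t * jap γ x - w t' x' -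
        (‖x - x'‖ ^ 2 / (2 * δ) + (t - t') ^ 2 / (2 * δ)) ≤
      V τ y - ⟪p, y⟫ - A τ * jap γ y - w τ' y' -
        (‖y - y'‖ ^ 2 / (2 * δ) + (τ - τ') ^ 2 / (2 * δ)))
    {r : ℝ} (hr : 0 < r) (hr1 : r ≤ 1) :
    deriv A τ * jap γ y ≤ 5 * (A τ * jap γ y) * (∫ z, wgt γ z * levyKernel N s g z) +
      (1 / δ) * (∫ z in {z : EN N | ‖z‖ ≤ r}, ‖z‖ ^ 2 * levyKernel N s g z) +
      (deriv W (w τ' y' + ⟪p, y'⟫) - deriv W (V τ y)) + (σ τ y - σ τ' y') := by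
  have hn := near_integrable hγ1 hγ2 hI hr1
  have hτm : τ ∈ Icc 0 S := Ioo_subset_Icc_self hτ
  have hτm' : τ' ∈ Icc 0 S := Ioo_subset_Icc_self hτ'
  have hf1 : (1 : ℝ) ≤ jap γ y := one_le_jap (by linarith) y
  have hfc : ContDiff ℝ 2 (jap γ : EN N → ℝ) := jap_contDiff γ
  set c := 5 * (A τ * jap γ y) with hc
  have hc0 : 0 ≤ c := by positivity
  -- inequality for the subsolution
  set φ : ℝ → EN N → ℝ := fun t x => ⟪p, x⟫ + A t * jap γ x +
    (‖x - y'‖ ^ 2 / (2 * δ) + (t - τ') ^ 2 / (2 * δ)) with hφ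
  have hφc : ContDiff ℝ 2 (fun q : ℝ × EN N => φ q.1 q.2) := by
    have h1 : ContDiff ℝ 2 (fun q : ℝ × EN N => ‖q.2 - y'‖ ^ 2) := by
      exact (contDiff_snd.sub contDiff_const).norm_sq ℝ
    have h2 : ContDiff ℝ 2 (fun q : ℝ × EN N => ⟪p, q.2⟫) :=
      contDiff_const.inner ℝ contDiff_snd
    simp only [hφ]
    fun_prop
  have hv1 := hV τ y hτ.1 φ hφc (min τ (S - τ) / 2) r
    (by have := lt_min hτ.1 (sub_pos.2 hτ.2); linarith)
    (by have := min_le_left τ (S - τ); have := hτ.1; linarith) hr (by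
      intro t x ht _
      have h3 : 0 < τ := hτ.1
      have h4 : τ < S := hτ.2
      have h3' : 0 < τ' := hτ'.1
      have h4' : τ' < S := hτ'.2
      have h1 := min_le_left τ (S - τ)
      have h2 := min_le_right τ (S - τ)
      have := hmax t ⟨by linarith [ht.1], by linarith [ht.2]⟩ x τ' hτm' y'
      simp only [hφ]
      linarith)
  have hd1 : deriv (fun t => φ t y) τ = deriv A τ * jap γ y + (τ - τ') / δ := by
    refine HasDerivAt.deriv ?_
    have h1 : HasDerivAt A (deriv A τ) τ := (hA.differentiable (by norm_num) τ).hasDerivAt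
    simp only [hφ]
    exact ((h1.mul_const (jap γ y)).const_add _).add ((timequad_hasDerivAt δ τ' τ).const_add _)
  have hfd1 : fderiv ℝ (fun x => φ τ x) y =
      innerSL ℝ p + A τ • japD γ y + (1 / δ) • innerSL ℝ (y - y') := by
    refine HasFDerivAt.fderiv ?_
    simp only [hφ]
    exact ((innerSL ℝ p).hasFDerivAt.add ((jap_hasFDerivAt γ y).const_mul (A τ))).add
      ((quad_hasFDerivAt δ y' y).add_const _)
  have hi1 : levyI1 N s g (fun x => φ τ x) r y ≤
      ∫ z in {z : EN N | ‖z‖ ≤ r}, (c * wgt γ z + ‖z‖ ^ 2 / (2 * δ)) * levyKernel N s g z := by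
    refine levyI1_le hg hs (fun z => by have := wgt_nonneg γ z; positivity) ?_ (fun z _ => ?_)
    · have h1 : IntegrableOn (fun z => c * (wgt γ z * levyKernel N s g z) +
          (1 / (2 * δ)) * (‖z‖ ^ 2 * levyKernel N s g z)) {z : EN N | ‖z‖ ≤ r} :=
        (hI.const_mul c).integrableOn.add (hn.const_mul _)
      refine h1.congr_fun (fun z _ => ?_) (measSet_le r)
      simp only
      ring
    · rw [hfd1]
      have h1 := quad_incr δ y' y z
      have h2 := mul_le_mul_of_nonneg_left (jap_add_le_wgt hγ1 hγ2 y z) hA0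
      simp only [hφ, add_apply, innerSL_apply_apply, inner_add_right] at h1 ⊢
      simp only [smul_apply, smul_eq_mul, hc] at h1 h2 ⊢
      linarith
  have hi1' : ∫ z in {z : EN N | ‖z‖ ≤ r},
      (c * wgt γ z + ‖z‖ ^ 2 / (2 * δ)) * levyKernel N s g z =
      c * (∫ z in {z : EN N | ‖z‖ ≤ r}, wgt γ z * levyKernel N s g z) +
      (1 / (2 * δ)) * ∫ z in {z : EN N | ‖z‖ ≤ r}, ‖z‖ ^ 2 * levyKernel N s g z := by
    rw [← integral_const_mul, ← integral_const_mul, ← integral_add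
      (hI.const_mul c).integrableOn (hn.const_mul _)]
    refine integral_congr_ae (ae_of_all _ fun z => ?_)
    simp only
    ring
  -- inequality for the supersolution
  set ψ : ℝ → EN N → ℝ := fun t x =>
    -(‖x - y‖ ^ 2 / (2 * δ) + (t - τ) ^ 2 / (2 * δ)) with hψ
  have hψc : ContDiff ℝ 2 (fun q : ℝ × EN N => ψ q.1 q.2) := by
    have h1 : ContDiff ℝ 2 (fun q : ℝ × EN N => ‖q.2 - y‖ ^ 2) := by
      exact (contDiff_snd.sub contDiff_const).norm_sq ℝ
    simp only [hψ]
    fun_prop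
  have hv2 := hw.2.2.2 τ' y' hτ'.1 ψ hψc (min τ' (S - τ') / 2) r
    (by have := lt_min hτ'.1 (sub_pos.2 hτ'.2); linarith)
    (by have := min_le_left τ' (S - τ'); have := hτ'.1; linarith) hr (by
      intro t x ht _
      have h3 : 0 < τ := hτ.1
      have h4 : τ < S := hτ.2
      have h3' : 0 < τ' := hτ'.1
      have h4' : τ' < S := hτ'.2
      have h1 := min_le_left τ' (S - τ')
      have h2 := min_le_right τ' (S - τ')
      have := hmax τ hτm y t ⟨by linarith [ht.1, hτ'.1], by linarith [ht.2, hτ'.2]⟩ x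
      simp only [hψ]
      rw [norm_sub_rev x y, norm_sub_rev y' y, ← neg_sub τ t, ← neg_sub τ τ', neg_sq, neg_sq]
      linarith)
  have hd2 : deriv (fun t => ψ t y') τ' = (τ - τ') / δ := by
    rw [show (τ - τ') / δ = -((τ' - τ) / δ) by ring]
    refine HasDerivAt.deriv ?_
    simp only [hψ]
    exact ((timequad_hasDerivAt δ τ τ').const_add _).neg
  have hi2 : levyI1 N s g (fun x => - ψ τ' x) r y' ≤
      ∫ z in {z : EN N | ‖z‖ ≤ r}, ((1 / (2 * δ)) * ‖z‖ ^ 2) * levyKernel N s g z := by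
    have hfd : fderiv ℝ (fun x => - ψ τ' x) y' = (1 / δ) • innerSL ℝ (y' - y) := by
      refine HasFDerivAt.fderiv ?_
      simp only [hψ, neg_neg]
      exact (quad_hasFDerivAt δ y y').add_const _
    refine levyI1_le hg hs (fun z => by positivity) ?_ (fun z _ => ?_)
    · simp_rw [mul_assoc]
      exact hn.const_mul _
    · rw [hfd]
      have h1 := quad_incr δ y y' z
      simp only [hψ] at h1 ⊢
      rw [show 1 / (2 * δ) * ‖z‖ ^ 2 = ‖z‖ ^ 2 / (2 * δ) by ring, ← h1]
      linarith
  rw [levyI1_neg] at hi2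
  simp_rw [mul_assoc] at hi2
  rw [integral_const_mul] at hi2
  -- comparing both functions after the same shift `z` cancels the quadratic terms of the doubling
  -- and leaves only the penalisation
  have hVs := slice_continuous hVc hτ.1.le
  have hws := slice_continuous hwc hτ'.1.le
  have hB0 : 0 ≤ B := (abs_nonneg _).trans (hVB τ hτm y)
  have hdiff : levyI2 N s g (fun x => V τ x) r y - levyI2 N s g (fun x => w τ' x) r y' ≤
      c * ∫ z in {z : EN N | r < ‖z‖}, wgt γ z * levyKernel N s g z := by
    have j1 : IntegrableOn (fun z => (V τ (y + z) - V τ y) * levyKernel N s g z)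
        {z : EN N | r < ‖z‖} := by
      refine integrableOn_far hg hs hγ1 hγ2 hI hr hr1 (by fun_prop) (B := 2 * B) (fun z => ?_)
      have h1 := abs_le.1 (hVB τ hτm (y + z))
      have h2 := abs_le.1 (hVB τ hτm y)
      have h3 : 0 ≤ B * ‖z‖ := by positivity
      rw [abs_le]
      constructor <;> nlinarith
    have j2 : IntegrableOn (fun z => (w τ' (y' + z) - w τ' y') * levyKernel N s g z)
        {z : EN N | r < ‖z‖} := by
      refine integrableOn_far hg hs hγ1 hγ2 hI hr hr1 (by fun_prop) (B := 2 * B) (fun z => ?_)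
      have h1 := abs_le.1 (hwB τ' hτm' (y' + z))
      have h2 := abs_le.1 (hwB τ' hτm' y')
      have h3 : 0 ≤ B * ‖z‖ := by positivity
      rw [abs_le]
      constructor <;> nlinarith
    unfold levyI2
    rw [← integral_sub j1 j2]
    simp_rw [← sub_mul]
    refine far_le hg hs hγ1 hγ2 hI hr hr1 (by fun_prop) (B := 4 * B) (fun z => ?_)
      (innerSL ℝ p + A τ • japD γ y) (fun z _ => ?_)
    · have h1 := abs_le.1 (hVB τ hτm (y + z))
      have h2 := abs_le.1 (hVB τ hτm y)
      have h4 := abs_le.1 (hwB τ' hτm' (y' + z))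
      have h5 := abs_le.1 (hwB τ' hτm' y')
      have h3 : 0 ≤ B * ‖z‖ := by positivity
      rw [abs_le]
      constructor <;> nlinarith
    · have h1 := hmax τ hτm (y + z) τ' hτm' (y' + z)
      have h2 := mul_le_mul_of_nonneg_left (jap_add_le_wgt hγ1 hγ2 y z) hA0
      rw [show y + z - (y' + z) = y - y' by abel, inner_add_right] at h1
      simp only [add_apply, innerSL_apply_apply, smul_apply, smul_eq_mul, hc] at h2 ⊢
      linarith
  have hsum := near_add_far hI r
  rw [hd1] at hv1
  rw [hd2] at hv2
  rw [hi1'] at hi1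
  simp only [cellF] at hv1 hv2
  rw [← hsum, mul_add, show (1 / δ) = 1 / (2 * δ) + 1 / (2 * δ) by field_simp; norm_num, add_mul]
  linarith

/-! ### Comparison with the corrector -/

set_option maxHeartbeats 2000000 in
/-- Comparison for the cell equation with superlinear error: a subsolution starting below the plane
`⟪p, y⟫` plus `κ jap γ` stays below the corrector plus the plane, with an error that only grows
exponentially in time. -/
lemma micro {N : ℕ} {s γ : ℝ} {g : EN N → ℝ} (hg : H1 N g) (hs : 0 < s)
    (hγ1 : 1 < γ) (hγ2 : γ < 2)
    (hI : Integrable (fun z : EN N => wgt γ z * levyKernel N s g z))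
    {W : ℝ → ℝ} {σ : ℝ → EN N → ℝ} {V w : ℝ → EN N → ℝ} {p : EN N} {Kw Ks : ℝ}
    (hKw : 0 ≤ Kw) (hKs : 0 ≤ Ks) (hW : ∀ a b, |deriv W a - deriv W b| ≤ Kw * |a - b|)
    (hσ : ∀ t x t' x', |σ t x - σ t' x'| ≤ Ks * (|t - t'| + ‖x - x'‖))
    (hVc : ContinuousOn (fun q : ℝ × EN N => V q.1 q.2) (Ici 0 ×ˢ univ))
    (hVb : LocBddPos N V)
    (hV : ViscSub N s g (fun t x v _ I => I - deriv W v + σ t x) V)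
    (hwc : ContinuousOn (fun q : ℝ × EN N => w q.1 q.2) (Ici 0 ×ˢ univ))
    (hw : IsSupersol N s g (cellF N W σ p 0) (fun _ => 0) w)
    {κ T : ℝ} (hκ : 0 < κ) (hT : 0 < T) (h0 : ∀ y, V 0 y ≤ ⟪p, y⟫ + κ * jap γ y)
    {τ₀ : ℝ} (hτ₀ : τ₀ ∈ Icc 0 T) (y₀ : EN N) :
    V τ₀ y₀ ≤ w τ₀ y₀ + ⟪p, y₀⟫ +
      2 * κ * Real.exp ((5 * (∫ z, wgt γ z * levyKernel N s g z) + Kw + 1) * τ₀) * jap γ y₀ := by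
  by_contra! hcon
  set Cm := ∫ z, wgt γ z * levyKernel N s g z with hCm
  have hCm0 : 0 ≤ Cm := integral_nonneg fun z =>
    mul_nonneg (wgt_nonneg γ z) (levyKernel_nonneg hg hs z)
  set Λ := 5 * Cm + Kw + 1 with hΛ
  have hΛ0 : 0 < Λ := by positivity
  set S := T + 1 with hS
  have hS0 : 0 < S := by positivity
  obtain ⟨B₁, hB₁0, hB₁⟩ := bdd_Icc hVc hVb hS0
  obtain ⟨B₂, hB₂0, hB₂⟩ := bdd_Icc hwc hw.2.1 hS0
  set B := max B₁ B₂ with hB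
  have hVB : ∀ t ∈ Icc 0 S, ∀ x, |V t x| ≤ B := fun t ht x => (hB₁ t ht x).trans (le_max_left _ _)
  have hwB : ∀ t ∈ Icc 0 S, ∀ x, |w t x| ≤ B := fun t ht x => (hB₂ t ht x).trans (le_max_right _ _)
  have hB0 : 0 ≤ B := hB₁0.trans (le_max_left _ _)
  set f : EN N → ℝ := jap γ with hf
  have hf1 : ∀ x, 1 ≤ f x := fun x => one_le_jap (by linarith) x
  have hfχ : ∀ x : EN N, jap 1 x ≤ f x := fun x =>
    Real.rpow_le_rpow_of_exponent_le (by nlinarith [sq_nonneg ‖x‖]) (by linarith)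
  set C₁ := 2 * B + ‖p‖ with hC₁
  have hC₁0 : 0 ≤ C₁ := by positivity
  have hD : ∀ t ∈ Icc 0 S, ∀ x, V t x - w t x - ⟪p, x⟫ ≤ C₁ * jap 1 x := by
    intro t ht x
    have h1 := (abs_le.1 (hVB t ht x)).2
    have h2 := (abs_le.1 (hwB t ht x)).1
    have h3 := neg_abs_le ⟪p, x⟫
    have h4 := abs_real_inner_le_norm p x
    have h5 : ‖x‖ ≤ jap 1 x := norm_le_jap le_rfl x
    have h6 : (1 : ℝ) ≤ jap 1 x := one_le_jap zero_le_one x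
    have h7 : ‖p‖ * ‖x‖ ≤ ‖p‖ * jap 1 x := by gcongr
    rw [hC₁]
    nlinarith
  obtain ⟨n, hn⟩ := pow_unbounded_of_one_lt (C₁ / κ)
    (show 1 < S / T by rw [lt_div_iff₀ hT]; linarith)
  rw [div_lt_iff₀ hκ] at hn
  -- `A ≤ 2 exp (Λ t)` on `[0, T]`, but `A S` is so large that `κ A f` dominates the difference at
  -- the final time `S`, hence the maximum below is not attained there
  set A : ℝ → ℝ := fun t => Real.exp (Λ * t) * (1 + (t / T) ^ n) with hA
  have hAc : ContDiff ℝ 2 A := by simp only [hA]; fun_prop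
  have hA1 : ∀ t, 0 ≤ t → 1 ≤ A t := by
    intro t ht
    have h1 : 1 ≤ Real.exp (Λ * t) := Real.one_le_exp (by positivity)
    have h2 : 0 ≤ (t / T) ^ n := by positivity
    simp only [hA]
    nlinarith
  have hAS : C₁ ≤ κ * A S := by
    have h1 : 1 ≤ Real.exp (Λ * S) := Real.one_le_exp (by positivity)
    have h2 : 0 ≤ (S / T) ^ n := by positivity
    simp only [hA]
    nlinarith [mul_nonneg hκ.le h2]
  have hAd : ∀ t, 0 ≤ t → Λ * A t ≤ deriv A t := by
    intro t ht
    have hd := pow_deriv_nonneg hT ht n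
    have he : HasDerivAt (fun t => Real.exp (Λ * t)) (Real.exp (Λ * t) * (Λ * 1)) t :=
      ((hasDerivAt_id t).const_mul Λ).exp
    have h2 : HasDerivAt A _ t := he.mul (hd.1.const_add 1)
    rw [h2.deriv]
    simp only [hA]
    have := mul_nonneg (Real.exp_pos (Λ * t)).le hd.2
    linarith
  -- `κ'`, the maximum of `Q`, is the smallest constant with `V - w - ⟪p, ·⟫ ≤ κ' A f`; it is attained
  -- at `(ts, xs)`, and the assumption made for contradiction says `κ' > κ`
  set E : Set (ℝ × EN N) := Icc 0 S ×ˢ univ with hE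
  have hEcl : IsClosed E := isClosed_Icc.prod isClosed_univ
  have hEI : E ⊆ Ici 0 ×ˢ univ := prod_mono Icc_subset_Ici_self subset_rfl
  have hfc : Continuous f := (jap_contDiff γ).continuous
  have hAcc : Continuous A := hAc.continuous
  set Q : ℝ × EN N → ℝ := fun q => (V q.1 q.2 - w q.1 q.2 - ⟪p, q.2⟫) / (A q.1 * f q.2) with hQ
  have hAf1 : ∀ q ∈ E, 1 ≤ A q.1 * f q.2 := fun q hq =>
    one_le_mul_of_one_le_of_one_le (hA1 _ hq.1.1) (hf1 _)
  have hinnc : Continuous (fun q : ℝ × EN N => ⟪p, q.2⟫) := continuous_const.inner continuous_snd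
  have hQc : ContinuousOn Q E := by
    refine (((hVc.mono hEI).sub (hwc.mono hEI)).sub hinnc.continuousOn).div ?_ (fun q hq => ?_)
    · exact ((hAcc.comp continuous_fst).mul (hfc.comp continuous_snd)).continuousOn
    · have := hAf1 q hq
      positivity
  have hmem0 : (τ₀, y₀) ∈ E := ⟨⟨hτ₀.1, by simp only [hS]; linarith [hτ₀.2]⟩, mem_univ _⟩
  have hQ0 : κ < Q (τ₀, y₀) := by
    have h1 := hAf1 _ hmem0
    simp only [hQ]
    rw [lt_div_iff₀ (by simp only at h1; linarith)]
    have h2 : A τ₀ ≤ 2 * Real.exp (Λ * τ₀) := by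
      have h3 : (τ₀ / T) ^ n ≤ 1 :=
        pow_le_one₀ (div_nonneg hτ₀.1 hT.le) (by rw [div_le_one hT]; exact hτ₀.2)
      have := Real.exp_pos (Λ * τ₀)
      simp only [hA]
      nlinarith
    have h4 : κ * (A τ₀ * f y₀) ≤ κ * ((2 * Real.exp (Λ * τ₀)) * f y₀) := by
      have := hf1 y₀
      gcongr
    linarith
  obtain ⟨R₁, hR₁⟩ := jap_coercive hγ1 hκ N C₁
  obtain ⟨⟨ts, xs⟩, hmems, hmaxQ⟩ := exists_max_of_coercive hEcl hQc hmem0 (R := max S R₁) (by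
    intro q hq hle
    rw [Prod.norm_def]
    refine max_le_max ?_ ?_
    · rw [Real.norm_of_nonneg hq.1.1]; exact hq.1.2
    · refine hR₁ _ ?_
      have h1 : κ ≤ Q q := hQ0.le.trans hle
      have h2 := hAf1 q hq
      simp only [hQ] at h1
      rw [le_div_iff₀ (by linarith)] at h1
      have h3 := hD q.1 hq.1 q.2
      have h4 : 1 * f q.2 ≤ A q.1 * f q.2 :=
        mul_le_mul_of_nonneg_right (hA1 _ hq.1.1) (by linarith [hf1 q.2])
      have h5 := mul_le_mul_of_nonneg_left h4 hκ.le
      linarith)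
  set κ' := Q (ts, xs) with hκ'
  have hκκ : κ < κ' := hQ0.trans_le (hmaxQ _ hmem0)
  have hκ'0 : 0 < κ' := hκ.trans hκκ
  set P : ℝ × EN N → ℝ := fun q => V q.1 q.2 - ⟪p, q.2⟫ - κ' * A q.1 * f q.2 with hP
  have hPc : ContinuousOn P E := by
    refine ((hVc.mono hEI).sub hinnc.continuousOn).sub ?_
    exact ((continuous_const.mul (hAcc.comp continuous_fst)).mul
      (hfc.comp continuous_snd)).continuousOn
  have hPw : ∀ q ∈ E, P q ≤ w q.1 q.2 := by
    intro q hq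
    have h1 : Q q ≤ κ' := hmaxQ q hq
    have h2 := hAf1 q hq
    simp only [hQ] at h1
    rw [div_le_iff₀ (by linarith)] at h1
    simp only [hP]
    linarith
  have hPws : P (ts, xs) = w ts xs := by
    have h2 := hAf1 _ hmems
    have h1 : κ' * (A ts * f xs) = V ts xs - w ts xs - ⟪p, xs⟫ := by
      rw [hκ']
      simp only [hQ]
      simp only at h2
      exact div_mul_cancel₀ _ (by linarith)
    simp only [hP]
    linarith
  -- since `κ' > κ`, the contact cannot happen at the initial or final time, with a uniform gap
  have hgap : ∀ q ∈ E, q.1 = 0 ∨ q.1 = S → P q ≤ w q.1 q.2 - (κ' - κ) := by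
    intro q hq hq1
    have h2 := hAf1 q hq
    have h3 : V q.1 q.2 - w q.1 q.2 - ⟪p, q.2⟫ ≤ κ * (A q.1 * f q.2) := by
      rcases hq1 with h | h
      · have h4 := h0 q.2
        have h5 := hw.2.2.1 q.2
        have h6 : κ * (1 * f q.2) ≤ κ * (A 0 * f q.2) := by
          have := hf1 q.2
          gcongr
          exact hA1 0 le_rfl
        simp only at h5
        rw [h]
        linarith
      · have h4 := hD q.1 hq.1 q.2
        have h5 : C₁ * jap 1 q.2 ≤ κ * A S * f q.2 := by
          have := hfχ q.2
          have := hf1 q.2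
          exact mul_le_mul hAS (hfχ q.2) (by linarith [one_le_jap (c := 1) zero_le_one q.2])
            (hC₁0.trans hAS)
        rw [h] at h4 ⊢
        linarith
    have h7 : (κ' - κ) * 1 ≤ (κ' - κ) * (A q.1 * f q.2) := by
      have := sub_pos.2 hκκ
      gcongr
    simp only [hP]
    linarith
  -- the superlinear penalisation confines the maxima of `Ψ` below to a ball that does not depend on
  -- the doubling parameter `δ`
  obtain ⟨R₂, hR₂⟩ := jap_coercive hγ1 hκ'0 N C₁
  have hPle : ∀ q ∈ E, P q + B ≤ C₁ * jap 1 q.2 - κ' * f q.2 := by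
    intro q hq
    have h1 := (abs_le.1 (hVB q.1 hq.1 q.2)).2
    have h3 := neg_abs_le ⟪p, q.2⟫
    have h4 := abs_real_inner_le_norm p q.2
    have h5 : ‖q.2‖ ≤ jap 1 q.2 := norm_le_jap le_rfl q.2
    have h6 : (1 : ℝ) ≤ jap 1 q.2 := one_le_jap zero_le_one q.2
    have h7 : ‖p‖ * ‖q.2‖ ≤ ‖p‖ * jap 1 q.2 := by gcongr
    have h8 : κ' * (1 * f q.2) ≤ κ' * (A q.1 * f q.2) := by
      have := hf1 q.2
      gcongr
      exact hA1 _ hq.1.1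
    have h9 : 2 * B * 1 ≤ 2 * B * jap 1 q.2 := by gcongr
    simp only [hP]
    rw [hC₁]
    linarith
  obtain ⟨C₂, hC₂0, hC₂⟩ : ∃ C₂ : ℝ, 0 ≤ C₂ ∧ ∀ q ∈ E, P q + B ≤ C₂ := by
    refine ⟨C₁ * (1 + max R₂ 0), by positivity, fun q hq => ?_⟩
    have h0' := hPle q hq
    have h9 : jap 1 q.2 ≤ 1 + ‖q.2‖ := by
      have h := jap_one_lip 0 q.2
      have h' : jap 1 (0 : EN N) = 1 := by simp [jap]
      have := (abs_le.1 h).2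
      rw [h', sub_zero] at this
      linarith
    rcases le_or_gt (κ' * f q.2) (C₁ * jap 1 q.2) with h | h
    · have h1 := hR₂ q.2 h
      have h2 : C₁ * jap 1 q.2 ≤ C₁ * (1 + max R₂ 0) := by
        gcongr
        exact h9.trans (by gcongr; exact h1.trans (le_max_left _ _))
      have := hf1 q.2
      nlinarith
    · have : 0 ≤ C₁ * (1 + max R₂ 0) := by positivity
      linarith
  set R := max R₂ 0 + 1 with hR
  have hKc : IsCompact (Icc 0 S ×ˢ closedBall (0 : EN N) R) :=
    isCompact_Icc.prod (isCompact_closedBall 0 R)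
  have hKE : Icc 0 S ×ˢ closedBall (0 : EN N) R ⊆ E := prod_mono subset_rfl (subset_univ _)
  set ω := min ((κ' - κ) / 2) (κ / (4 * (Kw + 1))) with hω
  have hω0 : 0 < ω := lt_min (by linarith) (by positivity)
  have hω1 : ω < κ' - κ := (min_le_left _ _).trans_lt (by linarith)
  have hω2 : Kw * ω ≤ κ / 4 := by
    have : ω ≤ κ / (4 * (Kw + 1)) := min_le_right _ _
    rw [le_div_iff₀ (by positivity)] at this
    nlinarith
  obtain ⟨ρ₁, hρ₁, hρ₁'⟩ := Metric.uniformContinuousOn_iff.1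
    (hKc.uniformContinuousOn_of_continuous (hPc.mono hKE)) ω hω0
  obtain ⟨ρ₂, hρ₂, hρ₂'⟩ := Metric.uniformContinuousOn_iff.1
    (hKc.uniformContinuousOn_of_continuous ((hwc.mono hEI).mono hKE)) ω hω0
  set Z := Kw * ‖p‖ + 2 * Ks with hZ
  have hZ0 : 0 ≤ Z := by positivity
  obtain ⟨ρ, hρ0, hρ1, hρa, hρb, hρZ⟩ : ∃ ρ : ℝ, 0 < ρ ∧ ρ ≤ 1 ∧ ρ ≤ ρ₁ ∧ ρ ≤ ρ₂ ∧
      Z * ρ ≤ κ / 4 := by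
    refine ⟨min (min 1 (κ / (4 * (Z + 1)))) (min ρ₁ ρ₂), by positivity,
      (min_le_left _ _).trans (min_le_left _ _), (min_le_right _ _).trans (min_le_left _ _),
      (min_le_right _ _).trans (min_le_right _ _), ?_⟩
    have : min (min 1 (κ / (4 * (Z + 1)))) (min ρ₁ ρ₂) ≤ κ / (4 * (Z + 1)) :=
      (min_le_left _ _).trans (min_le_right _ _)
    rw [le_div_iff₀ (by positivity)] at this
    have h0 : 0 ≤ min (min 1 (κ / (4 * (Z + 1)))) (min ρ₁ ρ₂) := by positivity
    nlinarith
  obtain ⟨δ, hδ0, hδ⟩ : ∃ δ : ℝ, 0 < δ ∧ 2 * δ * C₂ < ρ ^ 2 := by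
    refine ⟨ρ ^ 2 / (2 * (C₂ + 1)), by positivity, ?_⟩
    have h1 : 2 * (ρ ^ 2 / (2 * (C₂ + 1))) * C₂ = ρ ^ 2 * (C₂ / (C₂ + 1)) := by field_simp
    have h2 : C₂ / (C₂ + 1) < 1 := by rw [div_lt_one (by positivity)]; linarith
    rw [h1]
    have : 0 < ρ ^ 2 := by positivity
    nlinarith
  -- doubling the variables at the contact point of `P` and `w`
  set Ψ : (ℝ × EN N) × (ℝ × EN N) → ℝ := fun q => P q.1 - w q.2.1 q.2.2 -
    (‖q.1.2 - q.2.2‖ ^ 2 / (2 * δ) + (q.1.1 - q.2.1) ^ 2 / (2 * δ)) with hΨ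
  have hΨc : ContinuousOn Ψ (E ×ˢ E) := by
    refine ((hPc.comp continuousOn_fst (fun q hq => hq.1)).sub
      ((hwc.mono hEI).comp continuousOn_snd (fun q hq => hq.2))).sub ?_
    exact Continuous.continuousOn (by fun_prop)
  have hΨs : Ψ ((ts, xs), (ts, xs)) = 0 := by simp [hΨ, hPws]
  have hloc : ∀ q ∈ E ×ˢ E, 0 ≤ Ψ q → ‖q.1.2‖ ≤ max R₂ 0 ∧ ‖q.1.2 - q.2.2‖ < ρ ∧
      |q.1.1 - q.2.1| < ρ := by
    intro q hq hle
    have h1 := (abs_le.1 (hwB q.2.1 hq.2.1 q.2.2)).1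
    have h2 := hPle q.1 hq.1
    have h3 := hC₂ q.1 hq.1
    have h4 : 0 ≤ ‖q.1.2 - q.2.2‖ ^ 2 / (2 * δ) := by positivity
    have h5 : 0 ≤ (q.1.1 - q.2.1) ^ 2 / (2 * δ) := by positivity
    simp only [hΨ] at hle
    refine ⟨(hR₂ _ (by linarith)).trans (le_max_left _ _), ?_, ?_⟩
    · have h6 : ‖q.1.2 - q.2.2‖ ^ 2 / (2 * δ) ≤ C₂ := by linarith
      rw [div_le_iff₀ (by positivity)] at h6
      exact lt_of_pow_lt_pow_left₀ 2 hρ0.le (by linarith)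
    · have h6 : (q.1.1 - q.2.1) ^ 2 / (2 * δ) ≤ C₂ := by linarith
      rw [div_le_iff₀ (by positivity)] at h6
      exact abs_lt_of_sq_lt_sq (by linarith) hρ0.le
  obtain ⟨⟨⟨τ, y⟩, ⟨τ', y'⟩⟩, hmem, hmaxΨ⟩ := exists_max_of_coercive (hEcl.prod hEcl) hΨc
    (a₀ := ((ts, xs), (ts, xs))) ⟨hmems, hmems⟩ (R := max S R) (by
      intro q hq hle
      rw [hΨs] at hle
      obtain ⟨h1, h2, -⟩ := hloc q hq hle
      have h3 : ‖q.2.2‖ ≤ R := by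
        have : q.2.2 = q.1.2 - (q.1.2 - q.2.2) := by abel
        rw [this]
        refine (norm_sub_le _ _).trans ?_
        simp only [hR]
        linarith
      rw [Prod.norm_def, Prod.norm_def, Prod.norm_def]
      refine max_le (max_le_max ?_ ?_) (max_le_max ?_ ?_)
      · rw [Real.norm_of_nonneg hq.1.1.1]; exact hq.1.1.2
      · simp only [hR]; linarith
      · rw [Real.norm_of_nonneg hq.2.1.1]; exact hq.2.1.2
      · exact h3)
  have hΨ0 : 0 ≤ Ψ ((τ, y), (τ', y')) := by
    rw [← hΨs]; exact hmaxΨ _ ⟨hmems, hmems⟩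
  obtain ⟨hy, hyy, hττ⟩ := hloc _ hmem hΨ0
  simp only at hy hyy hττ
  have hma : (τ, y) ∈ E := hmem.1
  have hmb : (τ', y') ∈ E := hmem.2
  have hKa : (τ, y) ∈ Icc 0 S ×ˢ closedBall (0 : EN N) R := by
    refine ⟨hma.1, ?_⟩
    simp only [mem_closedBall_zero_iff, hR]
    linarith
  have hKb : (τ', y') ∈ Icc 0 S ×ˢ closedBall (0 : EN N) R := by
    refine ⟨hmb.1, ?_⟩
    have : y' = y - (y - y') := by abel
    simp only [mem_closedBall_zero_iff, hR]
    rw [this]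
    exact (norm_sub_le _ _).trans (by linarith)
  have hdist : dist (τ, y) (τ', y') < ρ := by
    rw [Prod.dist_eq, Real.dist_eq, dist_eq_norm]
    exact max_lt hττ hyy
  have hwab := hρ₂' _ hKa _ hKb (hdist.trans_le hρb)
  have hPab := hρ₁' _ hKa _ hKb (hdist.trans_le hρa)
  rw [Real.dist_eq] at hwab hPab
  have hwab := abs_lt.1 hwab
  have hPab := abs_lt.1 hPab
  have hquad : 0 ≤ ‖y - y'‖ ^ 2 / (2 * δ) + (τ - τ') ^ 2 / (2 * δ) := by positivity
  have hPw0 : 0 ≤ P (τ, y) - w τ' y' := by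
    simp only [hΨ] at hΨ0
    linarith
  have hPw1 : P (τ, y) - w τ' y' ≤ ω := by
    have := hPw _ hma
    simp only at this hwab
    linarith
  have hτi : τ ∈ Ioo 0 S := by
    have : ¬ (τ = 0 ∨ τ = S) := fun h => by
      have := hgap _ hma h
      simp only at this hwab
      linarith
    push Not at this
    exact ⟨lt_of_le_of_ne hma.1.1 (Ne.symm this.1), lt_of_le_of_ne hma.1.2 this.2⟩
  have hτi' : τ' ∈ Ioo 0 S := by
    have : ¬ (τ' = 0 ∨ τ' = S) := fun h => by
      have := hgap _ hmb h
      simp only at this hPab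
      linarith
    push Not at this
    exact ⟨lt_of_le_of_ne hmb.1.1 (Ne.symm this.1), lt_of_le_of_ne hmb.1.2 this.2⟩
  obtain ⟨r, hr0, hr1, hr⟩ := near_small hγ1 hγ2 hI (η := δ * (κ / 4)) (by positivity)
  have hvisc := micro_visc hg hs hγ1 hγ2 hI hVc hV hwc hw hVB hwB (A := fun t => κ' * A t)
    (contDiff_const.mul hAc) hδ0 (τ := τ) (τ' := τ') (y := y) (y' := y')
    (mul_nonneg hκ'0.le (zero_le_one.trans (hA1 τ hma.1.1))) hτi hτi' (by
      intro t ht x t' ht' x'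
      have := hmaxΨ ((t, x), (t', x')) ⟨⟨ht, mem_univ _⟩, ⟨ht', mem_univ _⟩⟩
      simp only [hΨ, hP] at this
      exact this) hr0 hr1
  have hdA : deriv (fun t => κ' * A t) τ = κ' * deriv A τ :=
    deriv_const_mul _ (hAc.differentiable (by norm_num) τ)
  rw [hdA, ← hCm] at hvisc
  set X := κ' * A τ * f y with hX
  have hXκ : κ < X := by
    have h1 : κ' * 1 ≤ κ' * (A τ * f y) := by
      have := hAf1 _ hma
      gcongr
    linarith
  have h1 : Λ * X ≤ κ' * deriv A τ * f y := by
    have h2 := hAd τ hma.1.1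
    have h3 := mul_le_mul_of_nonneg_left (mul_le_mul_of_nonneg_right h2
      (zero_le_one.trans (hf1 y))) hκ'0.le
    linarith
  have h2 : 1 / δ * ∫ z in {z : EN N | ‖z‖ ≤ r}, ‖z‖ ^ 2 * levyKernel N s g z ≤ κ / 4 := by
    calc _ ≤ 1 / δ * (δ * (κ / 4)) := by gcongr
      _ = κ / 4 := by field_simp
  have h3 : deriv W (w τ' y' + ⟪p, y'⟫) - deriv W (V τ y) ≤ Kw * (X + ω + ‖p‖ * ρ) := by
    refine (le_abs_self _).trans ((hW _ _).trans ?_)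
    gcongr
    have h4 : w τ' y' + ⟪p, y'⟫ - V τ y = -(P (τ, y) - w τ' y') - X - ⟪p, y - y'⟫ := by
      simp only [hP, hX, inner_sub_right]
      ring
    have h5 := abs_real_inner_le_norm p (y - y')
    have h6 : ‖p‖ * ‖y - y'‖ ≤ ‖p‖ * ρ := by gcongr
    have h7 := abs_le.1 (h5.trans h6)
    rw [h4, abs_le]
    constructor <;> linarith
  have h4 : σ τ y - σ τ' y' ≤ Ks * (ρ + ρ) := by
    refine (le_abs_self _).trans ((hσ _ _ _ _).trans ?_)
    gcongr
  have h5 : Kw * ‖p‖ * ρ + 2 * Ks * ρ ≤ κ / 4 := by rw [← add_mul]; exact hρZ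
  have h6 : Λ * X = 5 * Cm * X + Kw * X + X := by rw [hΛ]; ring
  have h7 : Kw * (X + ω + ‖p‖ * ρ) = Kw * X + Kw * ω + Kw * ‖p‖ * ρ := by ring
  linarith

/-! ### Slope at a contact point -/

/-- A quantity with a small linear-plus-quadratic bound and a crude bound `b / ε + Q v` is small
relative to `v ^ γ`; the two bounds are used on either side of `v = 1 / ε`. -/
lemma small_superlinear {γ ε δ ρ b Q v a F : ℝ} (hγ1 : 1 < γ) (hγ2 : γ < 2) (hε : 0 < ε)
    (hδ : 0 < δ) (hρ : 0 ≤ ρ) (hb : 0 ≤ b) (hQ : 0 ≤ Q) (hv : 0 ≤ v)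
    (hF1 : v ≤ F) (hF2 : v ^ γ ≤ F) (h1 : a ≤ ρ * v + ε / δ * v ^ 2) (h2 : a ≤ b / ε + Q * v) :
    a ≤ (ρ + (1 / δ + b + Q) * ε ^ (γ - 1)) * F := by
  set e := ε ^ (γ - 1) with he
  have he0 : 0 < e := by positivity
  have hF0 : 0 ≤ F := hv.trans hF1
  rcases le_or_gt (ε * v) 1 with h | h
  · have h3 : ε * v ^ 2 ≤ e * v ^ γ := by
      rcases hv.eq_or_lt with h0 | h0
      · rw [← h0]; simp; positivity
      · have e1 : ε * v ^ 2 = (e * v ^ γ) * (ε * v) ^ (2 - γ) := by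
          rw [Real.mul_rpow hε.le hv, he]
          have a1 : ε ^ (γ - 1) * ε ^ (2 - γ) = ε := by
            rw [← Real.rpow_add hε]; ring_nf; exact Real.rpow_one ε
          have a2 : v ^ γ * v ^ (2 - γ) = v ^ 2 := by
            rw [← Real.rpow_add h0, ← Real.rpow_two]; ring_nf
          rw [← a2]; nth_rewrite 1 [← a1]; ring
        rw [e1]
        exact mul_le_of_le_one_right (by positivity)
          (Real.rpow_le_one (by positivity) h (by linarith))
    have h4 : ε / δ * v ^ 2 ≤ 1 / δ * (e * F) := by
      calc ε / δ * v ^ 2 = 1 / δ * (ε * v ^ 2) := by ring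
        _ ≤ 1 / δ * (e * v ^ γ) := by gcongr
        _ ≤ _ := by gcongr
    have h5 : ρ * v ≤ ρ * F := by gcongr
    have h6 : 0 ≤ b * (e * F) := by positivity
    have h7 : 0 ≤ Q * (e * F) := by positivity
    linarith
  · have hv0 : 0 < v := by
      by_contra! hc
      have : v = 0 := le_antisymm hc hv
      rw [this] at h
      linarith [mul_zero ε]
    have e1 : e * v ^ γ = (ε * v) ^ (γ - 1) * v := by
      rw [Real.mul_rpow hε.le hv, mul_assoc, ← Real.rpow_add_one hv0.ne', sub_add_cancel]
    have h3 : 1 ≤ (ε * v) ^ (γ - 1) := Real.one_le_rpow h.le (by linarith)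
    have h4 : v ≤ e * F := by
      calc v ≤ (ε * v) ^ (γ - 1) * v := le_mul_of_one_le_left hv h3
        _ = e * v ^ γ := e1.symm
        _ ≤ e * F := by gcongr
    have h5 : b / ε ≤ b * (e * F) := by
      rw [div_eq_mul_inv]
      gcongr
      refine le_trans ?_ h4
      rw [inv_le_iff_one_le_mul₀ hε]
      linarith
    have h6 : Q * v ≤ Q * (e * F) := by gcongr
    have h7 : 0 ≤ ρ * F := by positivity
    have h8 : 0 ≤ 1 / δ * (e * F) := by positivity
    linarith

lemma deriv_periodic {W : ℝ → ℝ} (hW : H2 W) (n : ℤ) (v : ℝ) :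
    deriv W (v + n) = deriv W v := by
  have hp : Function.Periodic W 1 := hW.2.2
  have : (fun x => W (x + n)) = W := by
    funext x
    have := hp.int_mul n x
    simpa using this
  rw [← deriv_comp_add_const, this]

lemma sigma_periodic {N : ℕ} {σ : ℝ → EN N → ℝ} (hσ : H3 N σ) (m : ℕ) (k : Fin N → ℤ) (t : ℝ)
    (x : EN N) :
    σ (m + t) ((WithLp.equiv 2 (Fin N → ℝ)).symm (fun j => (k j : ℝ)) + x) = σ t x := by
  rw [add_comm _ x, hσ.2.2]
  have hp : Function.Periodic (fun t => σ t x) 1 := fun t => hσ.2.1 t x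
  have := hp.nat_mul m t
  simp only [mul_one] at this
  rw [add_comm, this]

lemma sigma_lip {N : ℕ} {σ : ℝ → EN N → ℝ} (hσ : H3 N σ) :
    ∃ K : ℝ, 0 ≤ K ∧ ∀ t x t' x', |σ t x - σ t' x'| ≤ K * (|t - t'| + ‖x - x'‖) := by
  obtain ⟨K, hK⟩ := hσ.1
  refine ⟨K, K.2, fun t x t' x' => ?_⟩
  have h := hK.dist_le_mul (t, x) (t', x')
  rw [Real.dist_eq, Prod.dist_eq, Real.dist_eq, dist_eq_norm] at h
  refine h.trans ?_
  gcongr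
  have h1 := norm_nonneg (x - x')
  have h2 := abs_nonneg (t - t')
  exact max_le (by linarith) (by linarith)

/-- Rounding down to the lattice `ℤ^N`. -/
lemma exists_lattice {N : ℕ} (x : EN N) : ∃ k : Fin N → ℤ,
    ‖x - (WithLp.equiv 2 (Fin N → ℝ)).symm (fun j => (k j : ℝ))‖ ≤ √N := by
  refine ⟨fun j => ⌊x j⌋, ?_⟩
  rw [EuclideanSpace.norm_eq]
  refine Real.sqrt_le_sqrt ?_
  calc _ ≤ ∑ _i : Fin N, (1 : ℝ) := by
        refine Finset.sum_le_sum fun i _ => ?_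
        have e : (x - (WithLp.equiv 2 (Fin N → ℝ)).symm (fun j => ((⌊x j⌋ : ℤ) : ℝ))) i
            = Int.fract (x i) := rfl
        rw [e, Real.norm_of_nonneg (Int.fract_nonneg _)]
        exact pow_le_one₀ (Int.fract_nonneg _) (Int.fract_lt_one _).le
    _ = N := by simp

set_option maxHeartbeats 2000000 in
/-- A point where `u^ε` is touched from above by a function of slope `lam` in time and gradient `q`
up to small quadratic errors: blowing up and comparing with the corrector of gradient `p` close to
`q` over a microscopic time `τ ∈ [T0, T0 + 1]` bounds `lam τ` by the growth of the corrector. -/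
lemma one_step {N : ℕ} {s γ : ℝ} {g : EN N → ℝ} (hg : H1 N g) (hs : 0 < s)
    (hγ1 : 1 < γ) (hγ2 : γ < 2)
    (hI : Integrable (fun z : EN N => wgt γ z * levyKernel N s g z))
    {W : ℝ → ℝ} (hW : H2 W) {σ : ℝ → EN N → ℝ} (hσ : H3 N σ) {Kw : ℝ} (hKw : 0 ≤ Kw)
    (hWl : ∀ a b, |deriv W a - deriv W b| ≤ Kw * |a - b|)
    {ε : ℝ} (hε : 0 < ε) (hε1 : ε ≤ 1) {u₀ : EN N → ℝ} {u : ℝ → EN N → ℝ}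
    (huc : ContinuousOn (fun q : ℝ × EN N => u q.1 q.2) (Ici 0 ×ˢ univ))
    (hu : IsSubsol N s g
      (fun t x v _ I => ε ^ (2*s - 1) * I - deriv W (v / ε) + σ (t/ε) (ε⁻¹ • x)) u₀ u)
    {p q : EN N} {w : ℝ → EN N → ℝ}
    (hwc : ContinuousOn (fun q : ℝ × EN N => w q.1 q.2) (Ici 0 ×ˢ univ))
    (hw : IsSupersol N s g (cellF N W σ p 0) (fun _ => 0) w)
    {T0 δ β ρ b lamB lam t Q : ℝ} {x : EN N} (hT0 : 1 ≤ T0) (hδ : 0 < δ) (hβ : 0 < β)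
    (hb : 0 ≤ b) (hlam : |lam| ≤ lamB) (hpQ : ‖p‖ ≤ Q) (hqQ : ‖q‖ + β ≤ Q) (hpq : ‖q - p‖ ≤ ρ)
    (hεT : ε * ((T0 + 1) ^ 2 / (2 * δ) + N / δ) ≤ 1) (ht : ε * T0 ≤ t)
    (hup : ∀ t' ∈ Icc 0 t, ∀ x', u t' x' - u t x ≤ lam * (t' - t) + (t' - t) ^ 2 / (2 * δ) +
      ⟪q, x' - x⟫ + ‖x' - x‖ ^ 2 / (2 * δ) + β * ‖x' - x‖)
    (hfar : ∀ t' ∈ Icc 0 t, ∀ x', u t' x' - u t x ≤ b) :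
    ∃ τ ∈ Icc T0 (T0 + 1), ∃ e : EN N, ‖e‖ ≤ √N ∧
      lam * τ ≤ 2 * Q * √N + 2 + w τ e +
        2 * (ρ + β + (1 / δ + (b + lamB * (T0 + 1)) + Q) * ε ^ (γ - 1)) *
          Real.exp ((5 * (∫ z, wgt γ z * levyKernel N s g z) + Kw + 1) * (T0 + 1)) * (1 + N) := by
  obtain ⟨Ks, hKs, hσl⟩ := sigma_lip hσ
  have hQ0 : 0 ≤ Q := (norm_nonneg _).trans hpQ
  have hρ0 : 0 ≤ ρ := (norm_nonneg _).trans hpq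
  have hlamB : 0 ≤ lamB := (abs_nonneg _).trans hlam
  have hN2 : √(N : ℝ) ^ 2 = N := Real.sq_sqrt (Nat.cast_nonneg N)
  -- the blow-up is centred at the point `(m, K)` of the time-space lattice, a period of `σ`: the
  -- contact point sits at rescaled time `τ ∈ [T0, T0 + 1]` and in the unit cell; the integer `n`, a
  -- period of `W'`, shifts the rescaled function so that it starts below the plane
  set m := ⌊t / ε - T0⌋₊ with hm
  have htε : 0 ≤ t / ε - T0 := by
    rw [sub_nonneg, le_div_iff₀ hε]; linarith
  have hm1 : (m : ℝ) ≤ t / ε - T0 := Nat.floor_le htε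
  have hm2 : t / ε - T0 < m + 1 := Nat.lt_floor_add_one _
  set τ := t / ε - m with hτ
  have hτ1 : T0 ≤ τ := by linarith
  have hτ2 : τ ≤ T0 + 1 := by linarith
  have hτ0 : 0 < τ := by linarith
  have htτ : ε * (m + τ) = t := by rw [hτ]; field_simp; ring
  have ht0 : 0 < t := lt_of_lt_of_le (by positivity) ht
  obtain ⟨k, hk⟩ := exists_lattice (ε⁻¹ • x)
  set K : EN N := (WithLp.equiv 2 (Fin N → ℝ)).symm (fun j => (k j : ℝ)) with hK
  set e : EN N := ε⁻¹ • x - K with he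
  have hxe : ε • (K + e) = x := by
    rw [he, add_sub_cancel, smul_smul, mul_inv_cancel₀ hε.ne', one_smul]
  set c0 := Q * √N + 1 with hc0
  have hc00 : 0 ≤ c0 := by positivity
  set n := ⌈u t x / ε - lam * τ + c0⌉ with hn
  have hn1 : u t x / ε - lam * τ + c0 ≤ n := Int.le_ceil _
  have hn2 : (n : ℝ) < u t x / ε - lam * τ + c0 + 1 := Int.ceil_lt_add_one _
  set V : ℝ → EN N → ℝ := fun τ y => u (ε * (m + τ)) (ε • (K + y)) / ε - n with hV
  have hVc : ContinuousOn (fun q : ℝ × EN N => V q.1 q.2) (Ici 0 ×ˢ univ) := by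
    have h1 : ContinuousOn (fun q : ℝ × EN N => u (ε * (m + q.1)) (ε • (K + q.2)))
        (Ici 0 ×ˢ univ) :=
      huc.comp (f := fun q : ℝ × EN N => (ε * (m + q.1), ε • (K + q.2)))
        (Continuous.continuousOn (by fun_prop)) (fun q hq => ⟨by
          have : (0 : ℝ) ≤ q.1 := hq.1
          simp only [mem_Ici]; positivity, mem_univ _⟩)
    exact (h1.div_const ε).sub continuousOn_const
  have hVb : LocBddPos N V := by
    intro T hT
    obtain ⟨M, hM⟩ := hu.2.1 (ε * (m + T)) (by positivity)
    refine ⟨M / ε + |(n : ℝ)|, fun τ hτ y => ?_⟩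
    have hτp : 0 < τ := hτ.1
    have hτp2 : τ ≤ T := hτ.2
    have h1 := hM (ε * (m + τ)) ⟨by positivity, by gcongr⟩ (ε • (K + y))
    simp only [hV]
    refine (abs_sub _ _).trans ?_
    rw [abs_div, abs_of_pos hε]
    gcongr
  have hVv := rescale hε (u := u) hu.2.2.2 (m := m) (n := n) (k := K) (Nat.cast_nonneg m)
    (fun t x => sigma_periodic hσ m k t x) (fun v => deriv_periodic hW n v)
  set κ := ρ + β + (1 / δ + (b + lamB * (T0 + 1)) + Q) * ε ^ (γ - 1) with hκ
  have hκ0 : 0 < κ := by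
    have : 0 ≤ (1 / δ + (b + lamB * (T0 + 1)) + Q) * ε ^ (γ - 1) := by positivity
    linarith
  have hmt : ε * m ∈ Icc 0 t := ⟨by positivity, by rw [← htτ]; gcongr; linarith⟩
  have hmt' : ε * m - t = - (ε * τ) := by rw [← htτ]; ring
  have hlt : |lam * τ| ≤ lamB * (T0 + 1) := by
    rw [abs_mul, abs_of_pos hτ0]
    gcongr
  have hinit : ∀ y, V 0 y ≤ ⟪p, y⟫ + κ * jap γ y := by
    intro y
    have hxy : ε • (K + y) - x = ε • (y - e) := by
      rw [← hxe, ← smul_sub]; congr 1; abel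
    have hinn := abs_le.1 (abs_real_inner_le_norm p y)
    have hpy : ‖p‖ * ‖y‖ ≤ Q * ‖y‖ := by gcongr
    have hdiv : ∀ {a c : ℝ}, a ≤ ε * c → a / ε ≤ c := fun {a c} h => by
      rw [div_le_iff₀ hε]; linarith
    have hV0 : V 0 y = (u (ε * m) (ε • (K + y)) - u t x) / ε + u t x / ε - n := by
      simp only [hV, add_zero]; ring
    have key := small_superlinear (γ := γ) (ε := ε) (δ := δ) (ρ := ρ + β)
      (b := b + lamB * (T0 + 1)) (Q := Q) (v := ‖y‖) (a := V 0 y - ⟪p, y⟫) (F := jap γ y)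
      hγ1 hγ2 hε hδ (by positivity) (by positivity) hQ0 (norm_nonneg _)
      (norm_le_jap hγ1.le y) (rpow_le_jap (by linarith) y) ?_ ?_
    · linarith
    · have h1 := hup _ hmt (ε • (K + y))
      rw [hmt', hxy, norm_smul, Real.norm_of_nonneg hε.le, real_inner_smul_right] at h1
      have h2 : (u (ε * m) (ε • (K + y)) - u t x) / ε ≤ -(lam * τ) + ε * τ ^ 2 / (2 * δ) +
          ⟪q, y - e⟫ + ε * ‖y - e‖ ^ 2 / (2 * δ) + β * ‖y - e‖ := by
        refine hdiv (h1.trans (le_of_eq ?_))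
        field_simp
      have h3 : ‖y - e‖ ≤ ‖y‖ + √N := (norm_sub_le _ _).trans (by gcongr)
      have h4 : ‖y - e‖ ^ 2 ≤ 2 * ‖y‖ ^ 2 + 2 * N := by
        have : ‖y - e‖ ^ 2 ≤ (‖y‖ + √N) ^ 2 := by gcongr
        have a1 : (‖y‖ + √N) ^ 2 + (‖y‖ - √N) ^ 2 = 2 * ‖y‖ ^ 2 + 2 * √(N : ℝ) ^ 2 := by ring
        linarith [sq_nonneg (‖y‖ - √N)]
      have h5 : ⟪q, y - e⟫ ≤ ⟪p, y⟫ + ρ * ‖y‖ + ‖q‖ * √N := by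
        have a1 : ⟪q, y - e⟫ = ⟪p, y⟫ + ⟪q - p, y⟫ - ⟪q, e⟫ := by
          rw [inner_sub_right, inner_sub_left]; ring
        have a2 := real_inner_le_norm (q - p) y
        have a3 := (abs_le.1 (abs_real_inner_le_norm q e)).1
        have a4 : ‖q - p‖ * ‖y‖ ≤ ρ * ‖y‖ := by gcongr
        have a5 : ‖q‖ * ‖e‖ ≤ ‖q‖ * √N := by gcongr
        linarith
      have h6 : ε * τ ^ 2 / (2 * δ) ≤ ε * ((T0 + 1) ^ 2 / (2 * δ)) := by
        rw [mul_div_assoc]; gcongr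
      have h7 : ε * ‖y - e‖ ^ 2 / (2 * δ) ≤ ε / δ * ‖y‖ ^ 2 + ε * (N / δ) := by
        calc ε * ‖y - e‖ ^ 2 / (2 * δ) ≤ ε * (2 * ‖y‖ ^ 2 + 2 * N) / (2 * δ) := by gcongr
          _ = _ := by field_simp
      have h8 : β * ‖y - e‖ ≤ β * (‖y‖ + √N) := by gcongr
      have h9 : (‖q‖ + β) * √N ≤ Q * √N := by gcongr
      rw [hV0]
      simp only [hc0] at hn1
      linarith
    · have h1 : (u (ε * m) (ε • (K + y)) - u t x) / ε ≤ b / ε := by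
        gcongr
        exact hfar _ hmt _
      have h2 : lam * τ ≤ lamB * (T0 + 1) / ε := by
        refine ((le_abs_self _).trans hlt).trans ?_
        rw [le_div_iff₀ hε]
        exact mul_le_of_le_one_right (by positivity) hε1
      rw [hV0, add_div]
      linarith
  have hmic := micro hg hs hγ1 hγ2 hI hKw hKs hWl hσl hVc hVb hVv hwc hw hκ0
    (T := T0 + 1) (by linarith) hinit (τ₀ := τ) ⟨hτ0.le, hτ2⟩ e
  refine ⟨τ, ⟨hτ1, hτ2⟩, e, hk, ?_⟩
  have hVe : V τ e = u t x / ε - n := by simp only [hV, htτ, hxe]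
  rw [hVe] at hmic
  have h1 : ⟪p, e⟫ ≤ Q * √N := by
    refine (real_inner_le_norm p e).trans ?_
    gcongr
  have hCm0 : 0 ≤ ∫ z, wgt γ z * levyKernel N s g z := integral_nonneg fun z =>
    mul_nonneg (wgt_nonneg γ z) (levyKernel_nonneg hg hs z)
  have h2 : jap γ e ≤ 1 + N := by
    refine (jap_le hγ2.le e).trans ?_
    have : ‖e‖ ^ 2 ≤ √(N : ℝ) ^ 2 := by gcongr
    linarith
  have h3 : 2 * κ * Real.exp ((5 * (∫ z, wgt γ z * levyKernel N s g z) + Kw + 1) * τ) * jap γ e ≤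
      2 * κ * Real.exp ((5 * (∫ z, wgt γ z * levyKernel N s g z) + Kw + 1) * (T0 + 1)) *
        (1 + N) := by
    have : 0 ≤ jap γ e := zero_le_one.trans (one_le_jap (by linarith) e)
    gcongr
  simp only [hc0] at hn2
  linarith

/-! ### Uniform slope bounds -/

/-- For every gradient `q ∈ A` and all small `ε`, `β`: if `u^ε` is touched from above at `(t, x)`,
over the past `[0, t]`, by a paraboloid of time slope `lam` and gradient `q` (up to a cone of
slope `β`), then `lam ≤ Ham q + θ / 2`. The smallness threshold `ν` is uniform in `q ∈ A` and in the
contact point. -/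
def SlopeBound (N : ℕ) (Ham : EN N → ℝ) (u : ℝ → ℝ → EN N → ℝ) (δ tmin θ lamB b : ℝ)
    (A : Set (EN N)) : Prop :=
  ∃ ν : ℝ, 0 < ν ∧ ν ≤ 1 ∧ ∀ q ∈ A, ∀ β ε : ℝ, 0 < β → β ≤ ν → 0 < ε → ε ≤ ν →
    ∀ t, tmin ≤ t → ∀ (x : EN N) (lam : ℝ), |lam| ≤ lamB →
    (∀ t' ∈ Icc 0 t, ∀ x', u ε t' x' - u ε t x ≤ lam * (t' - t) + (t' - t) ^ 2 / (2 * δ) +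
      ⟪q, x' - x⟫ + ‖x' - x‖ ^ 2 / (2 * δ) + β * ‖x' - x‖) →
    (∀ t' ∈ Icc 0 t, ∀ x', u ε t' x' - u ε t x ≤ b) →
    lam ≤ Ham q + θ / 2

/-- The slope bound near one gradient `p`: the microscopic time `T0` is chosen so that the corrector
of gradient `p` has almost reached its asymptotic slope `Ham p`, and then `ρ` and `ν` so that the
errors in `one_step` are negligible over that time. -/
lemma local_slope {N : ℕ} {s γ : ℝ} {g : EN N → ℝ} (hg : H1 N g) (hs : 0 < s)
    (hγ1 : 1 < γ) (hγ2 : γ < 2)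
    (hI : Integrable (fun z : EN N => wgt γ z * levyKernel N s g z))
    {W : ℝ → ℝ} (hW : H2 W) {σ : ℝ → EN N → ℝ} (hσ : H3 N σ)
    {u₀ : EN N → ℝ} {u : ℝ → ℝ → EN N → ℝ}
    (huc : ∀ ε, 0 < ε → ContinuousOn (fun q : ℝ × EN N => u ε q.1 q.2) (Ici 0 ×ˢ univ))
    (hu : ∀ ε, 0 < ε → IsSubsol N s g
      (fun t x v _ I => ε ^ (2*s - 1) * I - deriv W (v / ε) + σ (t/ε) (ε⁻¹ • x)) u₀ (u ε))
    {Ham : EN N → ℝ} (hHam : Continuous Ham) {p : EN N} {w : ℝ → EN N → ℝ}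
    (hwc : ContinuousOn (fun q : ℝ × EN N => w q.1 q.2) (Ici 0 ×ˢ univ))
    (hw : IsSupersol N s g (cellF N W σ p 0) (fun _ => 0) w) (hwl : SlopeLim N w (Ham p))
    {δ tmin θ lamB b : ℝ} (hδ : 0 < δ) (htmin : 0 < tmin) (hθ : 0 < θ) (hlamB : 0 ≤ lamB)
    (hb : 0 ≤ b) :
    ∃ ρ > 0, SlopeBound N Ham u δ tmin θ lamB b (closedBall p ρ) := by
  obtain ⟨Kw, hKw⟩ := hW.2.1
  have hWl : ∀ a b, |deriv W a - deriv W b| ≤ (Kw : ℝ) * |a - b| := fun a b => by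
    simpa [Real.dist_eq] using hKw.dist_le_mul a b
  set Q := ‖p‖ + 2 with hQ
  obtain ⟨T1, hT1⟩ := hwl (θ / 8) (by positivity) (√N + 1) (by positivity)
  set T0 := max (max 1 T1) ((2 * Q * √N + 3) / (θ / 8)) with hT0
  have hT01 : 1 ≤ T0 := (le_max_left _ _).trans (le_max_left _ _)
  have hT02 : T1 ≤ T0 := (le_max_right _ _).trans (le_max_left _ _)
  have hT03 : 2 * Q * √N + 3 ≤ T0 * (θ / 8) := by
    rw [← div_le_iff₀ (by positivity)]; exact le_max_right _ _
  set G := Real.exp ((5 * (∫ z, wgt γ z * levyKernel N s g z) + Kw + 1) * (T0 + 1)) * (1 + N)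
    with hG
  have hG0 : 0 < G := by positivity
  set κ := 1 / (2 * G) with hκ
  have hκ0 : 0 < κ := by positivity
  obtain ⟨ρ0, hρ0, hHρ⟩ := Metric.continuousAt_iff.1 (hHam.continuousAt (x := p)) (θ / 4)
    (by positivity)
  set ρ := min (min (ρ0 / 2) (κ / 3)) 1 with hρ
  have hρpos : 0 < ρ := by positivity
  have hρ1 : ρ < ρ0 := ((min_le_left _ _).trans (min_le_left _ _)).trans_lt (by linarith)
  have hρ2 : ρ ≤ κ / 3 := (min_le_left _ _).trans (min_le_right _ _)
  have hρ3 : ρ ≤ 1 := min_le_right _ _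
  set B := 1 / δ + (b + lamB * (T0 + 1)) + Q with hB
  have hQ0 : 0 ≤ Q := by positivity
  have hB0 : 0 < B := by positivity
  set D := (T0 + 1) ^ 2 / (2 * δ) + N / δ with hD
  have hD0 : 0 < D := by positivity
  have hγ : 0 < γ - 1 := by linarith
  set ν := min (min (min (κ / 3) 1) (((κ / 3) / B) ^ (1 / (γ - 1)))) (min (1 / D) (tmin / T0))
    with hν
  have hνpos : 0 < ν := by positivity
  have hν1 : ν ≤ κ / 3 := (min_le_left _ _).trans ((min_le_left _ _).trans (min_le_left _ _))
  have hν2 : ν ≤ 1 := (min_le_left _ _).trans ((min_le_left _ _).trans (min_le_right _ _))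
  have hν3 : ν ≤ ((κ / 3) / B) ^ (1 / (γ - 1)) := (min_le_left _ _).trans (min_le_right _ _)
  have hν4 : ν ≤ 1 / D := (min_le_right _ _).trans (min_le_left _ _)
  have hν5 : ν ≤ tmin / T0 := (min_le_right _ _).trans (min_le_right _ _)
  refine ⟨ρ, hρpos, ν, hνpos, hν2, ?_⟩
  intro q hq β ε hβ hβν hε hεν t ht x lam hlam hup hfar
  have hqp : ‖q - p‖ ≤ ρ := by rwa [mem_closedBall, dist_eq_norm] at hq
  have hqn : ‖q‖ ≤ ‖p‖ + 1 := by
    have := norm_add_le (q - p) p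
    rw [sub_add_cancel] at this
    linarith
  have hεγ : B * ε ^ (γ - 1) ≤ κ / 3 := by
    have h1 : ε ^ (γ - 1) ≤ (((κ / 3) / B) ^ (1 / (γ - 1))) ^ (γ - 1) :=
      Real.rpow_le_rpow hε.le (hεν.trans hν3) hγ.le
    rw [← Real.rpow_mul (by positivity), one_div_mul_cancel hγ.ne', Real.rpow_one,
      le_div_iff₀ hB0] at h1
    linarith
  have hεD : ε * D ≤ 1 := by
    rw [← le_div_iff₀ hD0]; exact hεν.trans hν4
  have hεt : ε * T0 ≤ t := by
    refine le_trans ?_ ht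
    rw [← le_div_iff₀ (by linarith)]; exact hεν.trans hν5
  obtain ⟨τ, hτ, e, he, hle⟩ := one_step hg hs hγ1 hγ2 hI hW hσ Kw.coe_nonneg hWl hε (hεν.trans hν2)
    (huc ε hε) (hu ε hε) hwc hw (Q := Q) hT01 hδ hβ hb hlam (by linarith) (by linarith) hqp hεD hεt
    hup hfar
  have hτ1 : T0 ≤ τ := hτ.1
  have hτ0 : 0 < τ := by linarith
  have hwτ : w τ e ≤ τ * (Ham p + θ / 8) := by
    have h1 := (abs_le.1 (hT1 τ (hT02.trans hτ1) e (by linarith))).2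
    have h2 : w τ e / τ ≤ Ham p + θ / 8 := by linarith
    rw [div_le_iff₀ hτ0] at h2
    linarith
  have hκG : 2 * (ρ + β + B * ε ^ (γ - 1)) *
      Real.exp ((5 * (∫ z, wgt γ z * levyKernel N s g z) + Kw + 1) * (T0 + 1)) * (1 + N) ≤ 1 := by
    have h1 : ρ + β + B * ε ^ (γ - 1) ≤ κ := by linarith
    have h2 : 2 * (ρ + β + B * ε ^ (γ - 1)) *
      Real.exp ((5 * (∫ z, wgt γ z * levyKernel N s g z) + Kw + 1) * (T0 + 1)) * (1 + N) =
        2 * (ρ + β + B * ε ^ (γ - 1)) * G := by rw [hG]; ring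
    rw [h2]
    calc 2 * (ρ + β + B * ε ^ (γ - 1)) * G ≤ 2 * κ * G := by gcongr
      _ = 1 := by rw [hκ]; field_simp
  have h3 : T0 * (θ / 8) ≤ τ * (θ / 8) := by gcongr
  have h4 : τ * lam ≤ τ * (Ham p + θ / 4) := by
    have : lam * τ ≤ 2 * Q * √N + 2 + w τ e + 1 := hle.trans (add_le_add_right hκG _)
    linarith
  have h5 : lam ≤ Ham p + θ / 4 := le_of_mul_le_mul_left h4 hτ0
  have h6 := hHρ (x := q) (by rw [dist_eq_norm]; linarith)
  rw [Real.dist_eq] at h6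
  have := (abs_lt.1 h6).1
  linarith

/-- The slope bound uniformly over a ball of gradients, by compactness. -/
lemma uniform_slope {N : ℕ} {s γ : ℝ} {g : EN N → ℝ} (hg : H1 N g) (hs : 0 < s)
    (hγ1 : 1 < γ) (hγ2 : γ < 2)
    (hI : Integrable (fun z : EN N => wgt γ z * levyKernel N s g z))
    {W : ℝ → ℝ} (hW : H2 W) {σ : ℝ → EN N → ℝ} (hσ : H3 N σ)
    {u₀ : EN N → ℝ} {u : ℝ → ℝ → EN N → ℝ}
    (huc : ∀ ε, 0 < ε → ContinuousOn (fun q : ℝ × EN N => u ε q.1 q.2) (Ici 0 ×ˢ univ))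
    (hu : ∀ ε, 0 < ε → IsSubsol N s g
      (fun t x v _ I => ε ^ (2*s - 1) * I - deriv W (v / ε) + σ (t/ε) (ε⁻¹ • x)) u₀ (u ε))
    {Ham : EN N → ℝ} (hHam : Continuous Ham)
    (hw : ∀ p, ∃ w : ℝ → EN N → ℝ,
      ContinuousOn (fun q : ℝ × EN N => w q.1 q.2) (Ici 0 ×ˢ univ) ∧
      IsSupersol N s g (cellF N W σ p 0) (fun _ => 0) w ∧ SlopeLim N w (Ham p))
    {δ tmin θ lamB b : ℝ} (hδ : 0 < δ) (htmin : 0 < tmin) (hθ : 0 < θ) (hlamB : 0 ≤ lamB)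
    (hb : 0 ≤ b) (r : ℝ) :
    SlopeBound N Ham u δ tmin θ lamB b (closedBall 0 r) := by
  refine (isCompact_closedBall (0 : EN N) r).induction_on ?_ ?_ ?_ ?_
  · exact ⟨1, one_pos, le_rfl, fun q hq => absurd hq (notMem_empty q)⟩
  · rintro A B hAB ⟨ν, h0, h1, h⟩
    exact ⟨ν, h0, h1, fun q hq => h q (hAB hq)⟩
  · rintro A B ⟨ν, h0, h1, h⟩ ⟨ν', h0', h1', h'⟩
    refine ⟨min ν ν', lt_min h0 h0', (min_le_left _ _).trans h1, ?_⟩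
    intro q hq β ε hβ hβν hε hεν
    rcases hq with hq | hq
    · exact h q hq β ε hβ (hβν.trans (min_le_left _ _)) hε (hεν.trans (min_le_left _ _))
    · exact h' q hq β ε hβ (hβν.trans (min_le_right _ _)) hε (hεν.trans (min_le_right _ _))
  · intro p _
    obtain ⟨w, hwc, hws, hwl⟩ := hw p
    obtain ⟨ρ, hρ, h⟩ := local_slope hg hs hγ1 hγ2 hI hW hσ huc hu hHam hwc hws hwl hδ htmin hθ
      hlamB hb
    exact ⟨closedBall p ρ, mem_nhdsWithin_of_mem_nhds (closedBall_mem_nhds p hρ), h⟩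

/-! ### Comparison of `u^ε` with the limit -/

lemma sigma_bdd {N : ℕ} {σ : ℝ → EN N → ℝ} (hσ : H3 N σ) :
    ∃ B : ℝ, 0 ≤ B ∧ ∀ t x, |σ t x| ≤ B := by
  obtain ⟨K, hK0, hK⟩ := sigma_lip hσ
  refine ⟨|σ 0 0| + K * (1 + √N), by positivity, fun t x => ?_⟩
  obtain ⟨k, hk⟩ := exists_lattice x
  set κ := (WithLp.equiv 2 (Fin N → ℝ)).symm (fun j => (k j : ℝ)) with hκ
  have h1 : σ t x = σ (Int.fract t) (x - κ) := by
    have hp : Function.Periodic (fun t => σ t x) 1 := fun t => hσ.2.1 t x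
    have h2 := hp.int_mul ⌊t⌋ (Int.fract t)
    simp only [mul_one, Int.fract_add_floor] at h2
    have h3 := hσ.2.2 k (Int.fract t) (x - κ)
    rw [← hκ, sub_add_cancel] at h3
    rw [h2, h3]
  have h2 := hK (Int.fract t) (x - κ) 0 0
  rw [sub_zero, sub_zero, abs_of_nonneg (Int.fract_nonneg t)] at h2
  have h3 : K * (Int.fract t + ‖x - κ‖) ≤ K * (1 + √N) := by
    gcongr
    exact (Int.fract_lt_one t).le
  have h4 := abs_sub_abs_le_abs_sub (σ (Int.fract t) (x - κ)) (σ 0 0)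
  rw [h1]
  linarith

lemma derivW_bdd {W : ℝ → ℝ} (hW : H2 W) : ∃ B : ℝ, 0 ≤ B ∧ ∀ v, |deriv W v| ≤ B := by
  obtain ⟨K, hK⟩ := hW.2.1
  refine ⟨|deriv W 0| + K, by positivity, fun v => ?_⟩
  have h1 : deriv W v = deriv W (Int.fract v) := by
    have := deriv_periodic hW ⌊v⌋ (Int.fract v)
    rwa [Int.fract_add_floor] at this
  have h2 := hK.dist_le_mul (Int.fract v) 0
  rw [Real.dist_eq, Real.dist_eq, sub_zero, abs_of_nonneg (Int.fract_nonneg v)] at h2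
  have h3 : (K : ℝ) * Int.fract v ≤ K * 1 := by
    gcongr
    exact (Int.fract_lt_one v).le
  have h4 := abs_sub_abs_le_abs_sub (deriv W (Int.fract v)) (deriv W 0)
  rw [h1]
  linarith

lemma jap_one_le {N : ℕ} (x : EN N) : jap 1 x ≤ 1 + ‖x‖ := by
  have h := (abs_le.1 (jap_one_lip 0 x)).2
  have h0 : jap 1 (0 : EN N) = 1 := by simp [jap]
  rw [h0, sub_zero] at h
  linarith

set_option maxHeartbeats 2000000 in
/-- One-sided convergence: doubling the variables in `u^ε - v` with penalisation parameter `δ`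
(independent of `ε`), a positive maximum would produce a contact point at which the slope bound
and the supersolution property of `v` contradict each other. -/
lemma comparison {N : ℕ} {s γ : ℝ} {g : EN N → ℝ} (hg : H1 N g) (hs : 0 < s)
    (hγ1 : 1 < γ) (hγ2 : γ < 2)
    (hI : Integrable (fun z : EN N => wgt γ z * levyKernel N s g z))
    {W : ℝ → ℝ} (hW : H2 W) {σ : ℝ → EN N → ℝ} (hσ : H3 N σ)
    {u₀ : EN N → ℝ} {u : ℝ → ℝ → EN N → ℝ}
    (huc : ∀ ε, 0 < ε → ContinuousOn (fun q : ℝ × EN N => u ε q.1 q.2) (Ici 0 ×ˢ univ))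
    (hu : ∀ ε, 0 < ε → IsSubsol N s g
      (fun t x v _ I => ε ^ (2*s - 1) * I - deriv W (v / ε) + σ (t/ε) (ε⁻¹ • x)) u₀ (u ε))
    {Ham : EN N → ℝ} (hHam : Continuous Ham)
    (hw : ∀ p, ∃ w : ℝ → EN N → ℝ,
      ContinuousOn (fun q : ℝ × EN N => w q.1 q.2) (Ici 0 ×ˢ univ) ∧
      IsSupersol N s g (cellF N W σ p 0) (fun _ => 0) w ∧ SlopeLim N w (Ham p))
    {v : ℝ → EN N → ℝ}
    (hvc : ContinuousOn (fun q : ℝ × EN N => v q.1 q.2) (Ici 0 ×ˢ univ))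
    (hv : IsSupersol N s g
      (fun _ _ _ Du _ => Ham ((InnerProductSpace.toDual ℝ (EN N)).symm Du)) u₀ v)
    {M C : ℝ} (hC : 0 ≤ C) (hMb : ∀ x, |u₀ x| ≤ M) (hlip : ∀ x y, u₀ y - u₀ x ≤ M * ‖y - x‖)
    (hub : ∀ ε, 0 < ε → ε ≤ 1 → ∀ t, 0 ≤ t → ∀ x, u ε t x ≤ u₀ x + C * t)
    (hvb : ∀ t, 0 ≤ t → ∀ x, u₀ x - C * t ≤ v t x)
    {η T R : ℝ} (hη : 0 < η) (hT : 0 < T) (hR : 0 < R) :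
    ∃ ε₀ > 0, ∀ ε : ℝ, 0 < ε → ε < ε₀ →
      ∀ t ∈ Set.Icc (0:ℝ) T, ∀ x : EN N, ‖x‖ ≤ R → u ε t x - v t x ≤ η := by
  have hM0 : 0 ≤ M := (abs_nonneg _).trans (hMb 0)
  set θ := η / (4 * T) with hθ
  have hθ0 : 0 < θ := by positivity
  have hθT : θ * T = η / 4 := by rw [hθ]; field_simp
  set tmin := η / (8 * (C + 1)) with htmin
  have htmin0 : 0 < tmin := by positivity
  set C1 := 2 * M + C * (2 * T + 1) with hC1
  have hC10 : 0 ≤ C1 := by positivity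
  set d := min (min (η / (4 * (M + C + 1))) (tmin / 2)) (1 / 2) with hd
  have hd0 : 0 < d := by positivity
  have hd1 : (M + C) * d ≤ η / 4 := by
    have h1 : d ≤ η / (4 * (M + C + 1)) := (min_le_left _ _).trans (min_le_left _ _)
    rw [le_div_iff₀ (by positivity)] at h1
    linarith
  have hd2 : d ≤ tmin / 2 := (min_le_left _ _).trans (min_le_right _ _)
  have hd3 : d ≤ 1 / 2 := min_le_right _ _
  set δ := d ^ 2 / (4 * (C1 + 1)) with hδ
  have hδ0 : 0 < δ := by positivity
  have hδd : C1 * (2 * δ) < d ^ 2 := by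
    have h1 : δ * (4 * (C1 + 1)) = d ^ 2 := by rw [hδ]; field_simp
    nlinarith
  obtain ⟨ν, hν0, hν1, hslope⟩ := uniform_slope hg hs hγ1 hγ2 hI hW hσ huc hu hHam hw
    (δ := δ) (tmin := tmin) (θ := θ) (lamB := d / δ + θ) (b := C1) hδ0 htmin0 hθ0 (by positivity)
    hC10 (d / δ)
  set β := min ν (η / (4 * (1 + R))) with hβ
  have hβ0 : 0 < β := by positivity
  have hβν : β ≤ ν := min_le_left _ _
  have hβR : β * (1 + R) ≤ η / 4 := by
    have h1 : β ≤ η / (4 * (1 + R)) := min_le_right _ _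
    rw [le_div_iff₀ (by positivity)] at h1
    linarith
  refine ⟨ν, hν0, fun ε hε hεν t₁ ht₁ x₁ hx₁ => ?_⟩
  by_contra! hcon
  have hε1 : ε ≤ 1 := by linarith
  have ht₁0 : 0 ≤ t₁ := ht₁.1
  have ht₁T : t₁ ≤ T := ht₁.2
  set Ψ : (ℝ × EN N) × (ℝ × EN N) → ℝ := fun a => u ε a.1.1 a.1.2 - v a.2.1 a.2.2 -
    ‖a.1.2 - a.2.2‖ ^ 2 / (2 * δ) - (a.1.1 - a.2.1) ^ 2 / (2 * δ) - θ * a.1.1 - β * jap 1 a.1.2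
    with hΨ
  set S : Set ((ℝ × EN N) × (ℝ × EN N)) := (Icc 0 T ×ˢ univ) ×ˢ (Icc 0 (T + 1) ×ˢ univ) with hS
  have hSc : IsClosed S :=
    (isClosed_Icc.prod isClosed_univ).prod (isClosed_Icc.prod isClosed_univ)
  have hΨc : ContinuousOn Ψ S := by
    have h1 : ContinuousOn (fun a : (ℝ × EN N) × (ℝ × EN N) => u ε a.1.1 a.1.2) S :=
      (huc ε hε).comp (f := fun a : (ℝ × EN N) × (ℝ × EN N) => a.1) continuousOn_fst
        (fun a ha => ⟨ha.1.1.1, mem_univ _⟩)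
    have h2 : ContinuousOn (fun a : (ℝ × EN N) × (ℝ × EN N) => v a.2.1 a.2.2) S :=
      hvc.comp (f := fun a : (ℝ × EN N) × (ℝ × EN N) => a.2) continuousOn_snd
        (fun a ha => ⟨ha.2.1.1, mem_univ _⟩)
    have hj : Continuous (jap 1 : EN N → ℝ) := (jap_contDiff 1).continuous
    have h3 : Continuous (fun a : (ℝ × EN N) × (ℝ × EN N) => ‖a.1.2 - a.2.2‖ ^ 2 / (2 * δ)) := by
      fun_prop
    have h4 : Continuous (fun a : (ℝ × EN N) × (ℝ × EN N) => (a.1.1 - a.2.1) ^ 2 / (2 * δ)) := by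
      fun_prop
    have h5 : Continuous (fun a : (ℝ × EN N) × (ℝ × EN N) => θ * a.1.1) := by fun_prop
    have h6 : Continuous (fun a : (ℝ × EN N) × (ℝ × EN N) => β * jap 1 a.1.2) := by fun_prop
    exact ((((h1.sub h2).sub h3.continuousOn).sub h4.continuousOn).sub h5.continuousOn).sub
      h6.continuousOn
  have hinit : η / 2 < Ψ ((t₁, x₁), (t₁, x₁)) := by
    have h1 : θ * t₁ ≤ θ * T := by gcongr
    have h2 : β * jap 1 x₁ ≤ β * (1 + R) := by
      gcongr
      exact (jap_one_le x₁).trans (by linarith)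
    have h3 : Ψ ((t₁, x₁), (t₁, x₁)) = u ε t₁ x₁ - v t₁ x₁ - θ * t₁ - β * jap 1 x₁ := by
      simp [hΨ]
    rw [h3]
    linarith
  have hdiff : ∀ t ∈ Icc 0 T, ∀ x, u ε t x ≤ M + C * T := fun t ht x => by
    have h0 : 0 ≤ t := ht.1
    have h1 := hub ε hε hε1 t h0 x
    have h2 := (abs_le.1 (hMb x)).2
    have h3 : C * t ≤ C * T := by gcongr; exact ht.2
    linarith
  have hdiffv : ∀ t ∈ Icc 0 (T + 1), ∀ x, -(M + C * (T + 1)) ≤ v t x := fun t ht x => by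
    have h0 : 0 ≤ t := ht.1
    have h1 := hvb t h0 x
    have h2 := (abs_le.1 (hMb x)).1
    have h3 : C * t ≤ C * (T + 1) := by gcongr; exact ht.2
    linarith
  -- consequences of the value of `Ψ` being positive
  have hpos : ∀ t ∈ Icc 0 T, ∀ x, ∀ t' ∈ Icc 0 (T + 1), ∀ y, 0 ≤ Ψ ((t, x), (t', y)) →
      ‖x - y‖ < d ∧ |t - t'| < d ∧ β * jap 1 x ≤ C1 := by
    intro t ht x t' ht' y h
    have h1 := hdiff t ht x
    have h2 := hdiffv t' ht' y
    have h0 : 0 ≤ t := ht.1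
    have h3 : 0 ≤ θ * t := by positivity
    have h4 : 0 ≤ β * jap 1 x := by
      have := one_le_jap (zero_le_one) x
      positivity
    have h5 : 0 ≤ ‖x - y‖ ^ 2 / (2 * δ) := by positivity
    have h6 : 0 ≤ (t - t') ^ 2 / (2 * δ) := by positivity
    simp only [hΨ] at h
    refine ⟨?_, ?_, by linarith⟩
    · have h7 : ‖x - y‖ ^ 2 / (2 * δ) ≤ C1 := by linarith
      rw [div_le_iff₀ (by positivity)] at h7
      exact lt_of_pow_lt_pow_left₀ 2 hd0.le (h7.trans_lt hδd)
    · have h7 : (t - t') ^ 2 / (2 * δ) ≤ C1 := by linarith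
      rw [div_le_iff₀ (by positivity)] at h7
      exact abs_lt_of_sq_lt_sq (h7.trans_lt hδd) hd0.le
  obtain ⟨⟨⟨t, x⟩, ⟨t', y⟩⟩, hmem, hmax⟩ := exists_max_of_coercive hSc hΨc
    (a₀ := ((t₁, x₁), (t₁, x₁))) ⟨⟨ht₁, mem_univ _⟩, ⟨ht₁0, by simp; linarith⟩, mem_univ _⟩
    (R := (T + 1) + C1 / β + d) (by
      rintro ⟨⟨t, x⟩, ⟨t', y⟩⟩ hm hle
      obtain ⟨h1, h2, h3⟩ := hpos t hm.1.1 x t' hm.2.1 y (by linarith)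
      have ht0 : 0 ≤ t := hm.1.1.1
      have htT : t ≤ T := hm.1.1.2
      have ht0' : 0 ≤ t' := hm.2.1.1
      have htT' : t' ≤ T + 1 := hm.2.1.2
      have h4 : ‖x‖ ≤ C1 / β := by
        rw [le_div_iff₀ hβ0]
        have : β * ‖x‖ ≤ β * jap 1 x := by
          gcongr
          exact norm_le_jap le_rfl x
        linarith
      have h5 : ‖y‖ ≤ ‖x‖ + ‖x - y‖ := by
        have := norm_sub_le x (x - y)
        rwa [sub_sub_cancel] at this
      have h6 : 0 ≤ C1 / β := by positivity
      simp only [Prod.norm_mk, Real.norm_of_nonneg ht0, Real.norm_of_nonneg ht0']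
      refine max_le (max_le ?_ ?_) (max_le ?_ ?_) <;> linarith)
  have htm : t ∈ Icc 0 T := hmem.1.1
  have htm' : t' ∈ Icc 0 (T + 1) := hmem.2.1
  have hval : η / 2 < Ψ ((t, x), (t', y)) := hinit.trans_le
    (hmax ((t₁, x₁), (t₁, x₁)) ⟨⟨ht₁, mem_univ _⟩, ⟨ht₁0, by simp; linarith⟩, mem_univ _⟩)
  obtain ⟨hxy, htt, -⟩ := hpos t htm x t' htm' y (by linarith)
  have ht0 : 0 ≤ t := htm.1
  have htT : t ≤ T := htm.2
  have ht0' : 0 ≤ t' := htm'.1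
  have htt1 := (abs_lt.1 htt).1
  have htt2 := (abs_lt.1 htt).2
  have huv : η / 2 < u ε t x - v t' y := by
    have h3 : 0 ≤ θ * t := by positivity
    have h4 : 0 ≤ β * jap 1 x := by
      have := one_le_jap (zero_le_one) x
      positivity
    have h5 : 0 ≤ ‖x - y‖ ^ 2 / (2 * δ) := by positivity
    have h6 : 0 ≤ (t - t') ^ 2 / (2 * δ) := by positivity
    simp only [hΨ] at hval
    linarith
  have httm : tmin ≤ t := by
    have h1 := hub ε hε hε1 t ht0 x
    have h2 := hvb t' ht0' y
    have h3 := hlip y x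
    have h4 : M * ‖x - y‖ ≤ M * d := by gcongr
    have h5 : C * t' ≤ C * (t + d) := by gcongr; linarith
    rw [htmin, div_le_iff₀ (by positivity)]
    linarith
  have ht'pos : 0 < t' := by linarith
  have ht'T : t' < T + 1 := by linarith
  set q : EN N := (1 / δ) • (x - y) with hq
  -- the supersolution inequality for `v` at `(t', y)`
  have hsup : Ham q ≤ (t - t') / δ := by
    have hφ : ContDiff ℝ 2 (fun a : ℝ × EN N =>
        -(‖a.2 - x‖ ^ 2 / (2 * δ)) - (a.1 - t) ^ 2 / (2 * δ)) := by
      have h1 : ContDiff ℝ 2 (fun a : ℝ × EN N => ‖a.2 - x‖ ^ 2) :=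
        (contDiff_snd.sub contDiff_const).norm_sq ℝ
      fun_prop
    have h := hv.2.2.2 t' y ht'pos (fun t'' z => -(‖z - x‖ ^ 2 / (2 * δ)) - (t'' - t) ^ 2 / (2 * δ))
      hφ (min (t' / 2) (T + 1 - t')) 1 (lt_min (by linarith) (by linarith))
      ((min_le_left _ _).trans_lt (by linarith)) one_pos (fun t'' z ht'' _ => by
        have a1 : t' - min (t' / 2) (T + 1 - t') < t'' := ht''.1
        have a2 : t'' < t' + min (t' / 2) (T + 1 - t') := ht''.2
        have a3 := min_le_left (t' / 2) (T + 1 - t')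
        have a4 := min_le_right (t' / 2) (T + 1 - t')
        have a5 := hmax ((t, x), (t'', z)) ⟨⟨htm, mem_univ _⟩,
          ⟨by simp only; linarith, by simp only; linarith⟩, mem_univ _⟩
        simp only [hΨ] at a5
        rw [norm_sub_rev z x, norm_sub_rev y x, ← neg_sub t t'', ← neg_sub t t', neg_sq, neg_sq]
        linarith)
    have hd1 : deriv (fun t'' => -(‖y - x‖ ^ 2 / (2 * δ)) - (t'' - t) ^ 2 / (2 * δ)) t' =
        (t - t') / δ := by
      have := (timequad_hasDerivAt δ t t').const_sub (-(‖y - x‖ ^ 2 / (2 * δ)))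
      rw [this.deriv]; ring
    have hd2 : fderiv ℝ (fun z => -(‖z - x‖ ^ 2 / (2 * δ)) - (t' - t) ^ 2 / (2 * δ)) y =
        InnerProductSpace.toDual ℝ (EN N) q := by
      have := ((quad_hasFDerivAt δ x y).neg).sub_const ((t' - t) ^ 2 / (2 * δ))
      refine this.fderiv.trans ?_
      ext z
      simp only [neg_apply, smul_apply, innerSL_apply_apply, hq,
        InnerProductSpace.toDual_apply_apply, smul_eq_mul, real_inner_smul_left]
      rw [← neg_sub x y, inner_neg_left]
      ring
    have hd3 : (InnerProductSpace.toDual ℝ (EN N)).symm (InnerProductSpace.toDual ℝ (EN N) q) = q :=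
      LinearIsometryEquiv.symm_apply_apply _ _
    rw [hd1, hd2] at h
    exact hd3 ▸ sub_nonneg.1 h
  have hqd : q ∈ closedBall (0 : EN N) (d / δ) := by
    rw [mem_closedBall_zero_iff, hq, norm_smul, Real.norm_of_nonneg (by positivity),
      one_div_mul_eq_div]
    gcongr
  have hlam : |(t - t') / δ + θ| ≤ d / δ + θ := by
    refine (abs_add_le _ _).trans ?_
    rw [abs_div, abs_of_pos hδ0, abs_of_pos hθ0]
    gcongr
  have hfin := hslope q hqd β ε hβ0 hβν hε hεν.le t httm x ((t - t') / δ + θ) hlam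
    (fun t'' ht'' x'' => by
      have a0 : t'' ≤ t := ht''.2
      have a1 := hmax ((t'', x''), (t', y)) ⟨⟨⟨ht''.1, a0.trans htT⟩, mem_univ _⟩,
        ⟨htm', mem_univ _⟩⟩
      simp only [hΨ] at a1
      have a2 : ‖x'' - y‖ ^ 2 / (2 * δ) = ‖x - y‖ ^ 2 / (2 * δ) + ⟪q, x'' - x⟫ +
          ‖x'' - x‖ ^ 2 / (2 * δ) := by
        have : x'' - y = (x - y) + (x'' - x) := by abel
        rw [this, norm_add_sq_real, hq, real_inner_smul_left]
        field_simp
      have a3 : (t'' - t') ^ 2 / (2 * δ) = (t - t') ^ 2 / (2 * δ) + (t - t') / δ * (t'' - t) +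
          (t'' - t) ^ 2 / (2 * δ) := by
        field_simp
        ring
      have a4 : β * (jap 1 x'' - jap 1 x) ≤ β * ‖x'' - x‖ := by
        gcongr
        exact (abs_le.1 (jap_one_lip x x'')).2
      linarith)
    (fun t'' ht'' x'' => by
      have a0 : t'' ≤ t := ht''.2
      have a1 := hdiff t'' ⟨ht''.1, a0.trans htT⟩ x''
      have a2 := hdiffv t' htm' y
      linarith)
  linarith

/-! ### Convergence -/

lemma datum_neg {N : ℕ} {M : ℝ} {u₀ : EN N → ℝ} {x : EN N}
    (h : |u₀ x| ≤ M ∧ ‖fderiv ℝ u₀ x‖ ≤ M ∧ ‖fderiv ℝ (fderiv ℝ u₀) x‖ ≤ M) :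
    |-u₀ x| ≤ M ∧ ‖fderiv ℝ (fun x => -u₀ x) x‖ ≤ M ∧
      ‖fderiv ℝ (fderiv ℝ (fun x => -u₀ x)) x‖ ≤ M := by
  have e1 : fderiv ℝ (fun x => -u₀ x) = fun x => -fderiv ℝ u₀ x := by
    funext x; exact fderiv_fun_neg
  rw [e1, fderiv_fun_neg, abs_neg, norm_neg]
  exact ⟨h.1, h.2.1, (ContinuousLinearMap.opNorm_neg _).trans_le h.2.2⟩

/-- One-sided convergence, with the barriers `u₀ ± C t` supplied by the regularity of `u₀`. -/
lemma one_sided {N : ℕ} (hN : 1 ≤ N) {s : ℝ} (hs : s ∈ Ioo (1/2 : ℝ) 1) {g : EN N → ℝ}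
    (hg : H1 N g) {W : ℝ → ℝ} (hW : H2 W) {σ : ℝ → EN N → ℝ} (hσ : H3 N σ)
    {u₀ : EN N → ℝ} (hu₀ : H4 N u₀) {u : ℝ → ℝ → EN N → ℝ}
    (huc : ∀ ε, 0 < ε → ContinuousOn (fun q : ℝ × EN N => u ε q.1 q.2) (Ici 0 ×ˢ univ))
    (hu : ∀ ε, 0 < ε → IsSubsol N s g
      (fun t x v _ I => ε ^ (2*s - 1) * I - deriv W (v / ε) + σ (t/ε) (ε⁻¹ • x)) u₀ (u ε))
    {Ham : EN N → ℝ} (hHam : Continuous Ham)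
    (hw : ∀ p, ∃ w : ℝ → EN N → ℝ,
      ContinuousOn (fun q : ℝ × EN N => w q.1 q.2) (Ici 0 ×ˢ univ) ∧
      IsSupersol N s g (cellF N W σ p 0) (fun _ => 0) w ∧ SlopeLim N w (Ham p))
    {v : ℝ → EN N → ℝ}
    (hvc : ContinuousOn (fun q : ℝ × EN N => v q.1 q.2) (Ici 0 ×ˢ univ))
    (hv : IsSupersol N s g
      (fun _ _ _ Du _ => Ham ((InnerProductSpace.toDual ℝ (EN N)).symm Du)) u₀ v)
    {η T R : ℝ} (hη : 0 < η) (hT : 0 < T) (hR : 0 < R) :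
    ∃ ε₀ > 0, ∀ ε : ℝ, 0 < ε → ε < ε₀ →
      ∀ t ∈ Set.Icc (0:ℝ) T, ∀ x : EN N, ‖x‖ ≤ R → u ε t x - v t x ≤ η := by
  obtain ⟨hs1, hs2⟩ := hs
  have hs0 : 0 < s := by linarith
  have hγ1 : 1 < s + 1/2 := by linarith
  have hγ2 : s + 1/2 < 2 := by linarith
  have hI : Integrable (fun z : EN N => wgt (s + 1/2) z * levyKernel N s g z) :=
    wgt_integrable hN hg hs0 hs2 (by linarith)
  obtain ⟨hc, M, hM⟩ := hu₀
  have hM0 : 0 ≤ M := (abs_nonneg _).trans (hM 0).1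
  obtain ⟨Bσ, hBσ0, hBσ⟩ := sigma_bdd hσ
  obtain ⟨Bw, hBw0, hBw⟩ := derivW_bdd hW
  obtain ⟨BH, hBH⟩ := (isCompact_closedBall (0 : EN N) (M + 1)).exists_bound_of_continuousOn
    hHam.continuousOn
  have hBH0 : 0 ≤ BH := (norm_nonneg _).trans (hBH 0 (by simp; linarith))
  set J := ∫ z : EN N, wgt (s + 1/2) z * levyKernel N s g z with hJ
  have hJ0 : 0 ≤ J := integral_nonneg fun z =>
    mul_nonneg (wgt_nonneg _ z) (levyKernel_nonneg hg hs0 z)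
  set C := (3 * M + 2) * J + Bw + Bσ + BH with hC
  have hC0 : 0 ≤ C := by positivity
  have hJM : 0 ≤ (3 * M + 2) * J := by positivity
  refine comparison hg hs0 hγ1 hγ2 hI hW hσ huc hu hHam hw hvc hv (M := M) (C := C + 1)
    (by linarith) (fun x => (hM x).1) (datum_lip hc hM) ?_ ?_ hη hT hR
  · intro ε hε hε1 t ht x
    refine barrier hg hs0 hγ1 hγ2 hI hc hM (huc ε hε) (hu ε hε) ?_ ht x
    intro t x a q I _ hIle
    have h1 := (abs_le.1 (hBw (a / ε))).1
    have h2 := (abs_le.1 (hBσ (t / ε) (ε⁻¹ • x))).2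
    have h3 : ε ^ (2 * s - 1) ≤ 1 := Real.rpow_le_one hε.le hε1 (by linarith)
    have h4 : 0 ≤ ε ^ (2 * s - 1) := by positivity
    have h5 : ε ^ (2 * s - 1) * I ≤ (3 * M + 2) * J :=
      (mul_le_mul_of_nonneg_left hIle h4).trans (mul_le_of_le_one_left hJM h3)
    linarith
  · intro t ht x
    have hn := hv.neg (G := fun _ _ _ Du _ =>
      -Ham ((InnerProductSpace.toDual ℝ (EN N)).symm (-Du))) (fun _ _ _ _ _ => rfl)
    have h := barrier hg hs0 hγ1 hγ2 hI hc.neg (M := M) (C := C) (fun x => ?_) hvc.neg hn ?_ ht x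
    · linarith
    · exact datum_neg (hM x)
    · intro t x a q I hq _
      have h1 := hBH ((InnerProductSpace.toDual ℝ (EN N)).symm (-q)) (by
        rw [mem_closedBall_zero_iff, LinearIsometryEquiv.norm_map, norm_neg]; exact hq)
      have h2 := (abs_le.1 h1).1
      linarith

/-- Reflected potential, which appears in the equation solved by `-u^ε`. -/
lemma H2.reflect {W : ℝ → ℝ} (hW : H2 W) : H2 (fun v => W (-v)) := by
  obtain ⟨h1, ⟨K, hK⟩, h3⟩ := hW
  refine ⟨h1.comp contDiff_neg, ⟨K, ?_⟩, fun v => ?_⟩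
  · have e : deriv (fun v => W (-v)) = fun v => - deriv W (-v) := by
      funext v; exact deriv_comp_neg W v
    rw [e]
    refine LipschitzWith.of_dist_le_mul fun a b => ?_
    rw [dist_neg_neg]
    refine (hK.dist_le_mul _ _).trans ?_
    rw [dist_neg_neg]
  · have := h3 (-(v + 1))
    rw [show -(v + 1) + 1 = -v by ring] at this
    exact this.symm

lemma H3.neg {N : ℕ} {σ : ℝ → EN N → ℝ} (hσ : H3 N σ) : H3 N (fun t x => - σ t x) := by
  obtain ⟨⟨K, hK⟩, h2, h3⟩ := hσ
  exact ⟨⟨K, hK.neg⟩, fun t x => congrArg Neg.neg (h2 t x),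
    fun k t x => congrArg Neg.neg (h3 k t x)⟩

lemma H4.neg {N : ℕ} {u₀ : EN N → ℝ} (h : H4 N u₀) : H4 N (fun x => - u₀ x) := by
  obtain ⟨hc, M, hM⟩ := h
  exact ⟨hc.neg, M, fun x => datum_neg (hM x)⟩

/-- **Convergence for `s > 1/2` (Theorem 1.2).** Under (H1)–(H4), the solution `u^ε` of
`∂_t u^ε = ε^{2s−1} I_s[u^ε] − W'(u^ε/ε) + σ(t/ε, x/ε)`, `u^ε(0,·) = u₀`, converges locally
uniformly to the solution `u⁰` of `∂_t u = H̄₁(∇_x u)`, `u(0,·) = u₀`, where `H̄₁(p) = H̄(p,0)`. -/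
theorem convergence_s_gt_half
    (N : ℕ) (hN : 1 ≤ N) (s : ℝ) (hs : s ∈ Set.Ioo (1/2 : ℝ) 1)
    (g : EN N → ℝ) (hg : H1 N g)
    (W : ℝ → ℝ) (hW : H2 W)
    (σ : ℝ → EN N → ℝ) (hσ : H3 N σ)
    (u₀ : EN N → ℝ) (hu₀ : H4 N u₀)
    -- `H̄` is the effective Hamiltonian given by the ergodicity theorem:
    (Hbar : EN N → ℝ → ℝ)
    (hHbarCont : Continuous (fun q : EN N × ℝ => Hbar q.1 q.2))
    (hHbar : ∀ (p : EN N) (L : ℝ), ∃ w : ℝ → EN N → ℝ,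
      IsSol N s g (cellF N W σ p L) (fun _ => 0) w ∧ SlopeLim N w (Hbar p L))
    -- `u^ε` is the unique viscosity solution of the `ε`-problem:
    (uε : ℝ → ℝ → EN N → ℝ)
    (huε : ∀ ε : ℝ, 0 < ε →
      IsSol N s g
        (fun t x v _ I => ε ^ (2*s - 1) * I - deriv W (v / ε) + σ (t/ε) (ε⁻¹ • x))
        u₀ (uε ε) ∧
      (∀ u' : ℝ → EN N → ℝ,
        IsSol N s g
          (fun t x v _ I => ε ^ (2*s - 1) * I - deriv W (v / ε) + σ (t/ε) (ε⁻¹ • x))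
          u₀ u' → ∀ t, 0 ≤ t → ∀ x, u' t x = uε ε t x))
    -- `u⁰` is the unique viscosity solution of the homogenized problem:
    (u0 : ℝ → EN N → ℝ)
    (hu0 : IsSol N s g
      (fun _ _ _ Du _ => Hbar ((InnerProductSpace.toDual ℝ (EN N)).symm Du) 0) u₀ u0)
    (hu0uniq : ∀ u' : ℝ → EN N → ℝ,
      IsSol N s g
        (fun _ _ _ Du _ => Hbar ((InnerProductSpace.toDual ℝ (EN N)).symm Du) 0) u₀ u' →
      ∀ t, 0 ≤ t → ∀ x, u' t x = u0 t x) :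
    -- then `u^ε → u⁰` locally uniformly in `(t,x)` as `ε → 0`:
    ∀ η > 0, ∀ T > 0, ∀ R > 0, ∃ ε₀ > 0, ∀ ε : ℝ, 0 < ε → ε < ε₀ →
      ∀ t ∈ Set.Icc (0:ℝ) T, ∀ x : EN N, ‖x‖ ≤ R → |uε ε t x - u0 t x| ≤ η := by
  intro η hη T hT R hR
  have hHc : Continuous (fun p => Hbar p 0) :=
    hHbarCont.comp (continuous_id.prodMk continuous_const)
  obtain ⟨ε₁, hε₁, h₁⟩ := one_sided hN hs hg hW hσ hu₀ (u := uε) (fun ε hε => (huε ε hε).1.1)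
    (fun ε hε => (huε ε hε).1.2.1) hHc
    (fun p => let ⟨w, hw, hl⟩ := hHbar p 0; ⟨w, hw.1, hw.2.2, hl⟩) hu0.1 hu0.2.2 hη hT hR
  -- the reverse inequality: the same statement for the equation satisfied by `-u^ε`
  have hdW : ∀ v, deriv (fun v => W (-v)) v = - deriv W (-v) := deriv_comp_neg W
  obtain ⟨ε₂, hε₂, h₂⟩ := one_sided hN hs hg hW.reflect hσ.neg hu₀.neg
    (u := fun ε t x => - uε ε t x) (Ham := fun p => - Hbar (-p) 0)
    (fun ε hε => (huε ε hε).1.1.neg)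
    (fun ε hε => (huε ε hε).1.2.2.neg fun t x v q I => by
      rw [hdW, neg_div]; ring)
    (hHc.comp continuous_neg).neg
    (fun p => by
      obtain ⟨w, hw, hl⟩ := hHbar (-p) 0
      refine ⟨fun t x => - w t x, hw.1.neg, ?_, fun e he r hr => ?_⟩
      · have h := hw.2.1.neg (G := cellF N (fun v => W (-v)) (fun t x => -σ t x) p 0)
          (fun t x v q I => by
            simp only [cellF]
            rw [hdW, inner_neg_left, neg_add]; ring)
        simpa only [neg_zero] using h
      · obtain ⟨T', hT'⟩ := hl e he r hr
        refine ⟨T', fun τ hτ y hy => ?_⟩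
        have := hT' τ hτ y hy
        rwa [neg_div, ← neg_sub', abs_neg])
    hu0.1.neg (hu0.2.1.neg fun t x v q I => by simp only [map_neg, neg_neg]) hη hT hR
  refine ⟨min ε₁ ε₂, lt_min hε₁ hε₂, fun ε hε hlt t ht x hx => abs_le.2 ⟨?_, ?_⟩⟩
  · have := h₂ ε hε (hlt.trans_le (min_le_right _ _)) t ht x hx
    linarith
  · exact h₁ ε hε (hlt.trans_le (min_le_left _ _)) t ht x hx
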